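/- Let k be a positive integer. As h → 0 with ε = ε(h) → 0 and, for some fixed δ̄ ∈ (0,1/2), ε(h) ≥ h^{1/2−δ̄} eventually, one has E( X_h^{2k}·1_{|X_h| ≤ ε} ) = (2k−1)!!·σ^{2k}·h^k + ((C₊+C₋)/(2k−Y))·h·ε^{2k−Y} + O(h²·ε^{2k−Y−2}) + O(h·ε^{2k−Y/2}) + O(h^{1/2}·ε^{2k−1}·e^{−ε²/(2σ²h)}) (the remainder being a sum of functions, each big-O of the indicated rate). Here (2k−1)!! denotes the double factorial. -/

import Mathlib

open MeasureTheory ProbabilityTheory Filter Asymptotics Set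
open scoped Topology NNReal ENNReal Real

noncomputable section

/-- The Lévy density `s(x) = (C₊·1_{x>0} + C₋·1_{x<0})·q(x)·|x|^{−1−Y}`. -/
def levyDensity (Y Cp Cm : ℝ) (q : ℝ → ℝ) (x : ℝ) : ℝ :=
  (if 0 < x then Cp else if x < 0 then Cm else 0) * q x * |x| ^ (-1 - Y)

/-- The Lévy measure `ν(dx) = s(x) dx`. -/
def levyMeasure (Y Cp Cm : ℝ) (q : ℝ → ℝ) : Measure ℝ :=
  volume.withDensity fun x => ENNReal.ofReal (levyDensity Y Cp Cm q x)

/-- The Lévy exponent `ψ_J(u) = ibu + ∫ (e^{iux} − 1 − iux·1_{|x|≤1}) ν(dx)`. -/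
def psiJ (b Y Cp Cm : ℝ) (q : ℝ → ℝ) (u : ℝ) : ℂ :=
  Complex.I * b * u +
    ∫ x : ℝ,
      (Complex.exp (Complex.I * u * x) - 1 - (if |x| ≤ 1 then Complex.I * u * x else 0))
      ∂(levyMeasure Y Cp Cm q)

/-- The scale parameter `ς = ((C₊+C₋)Γ(−Y)|cos(πY/2)|)^{1/Y}`. -/
def varsigma (Y Cp Cm : ℝ) : ℝ :=
  ((Cp + Cm) * Real.Gamma (-Y) * |Real.cos (π * Y / 2)|) ^ (1 / Y)

/-- The stable part of the Lévy exponent: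
`ς^Y |u|^Y (1 − iβ·sgn(u)·tan(πY/2))` with `β = (C₊−C₋)/(C₊+C₋)`. -/
def stablePart (Y Cp Cm : ℝ) (u : ℝ) : ℂ :=
  (varsigma Y Cp Cm ^ Y * |u| ^ Y : ℝ) *
    (1 - Complex.I * ((Cp - Cm) / (Cp + Cm)) * Real.sign u * Real.tan (π * Y / 2))

/-- Characteristic function of `X̃_h`, the time-`h` marginal of a Brownian motion with
variance `σ²` plus an independent strictly `Y`-stable process. -/
def tildeCF (σ Y Cp Cm : ℝ) (h u : ℝ) : ℂ :=
  Complex.exp (-(σ ^ 2 * u ^ 2 * h / 2) - h * stablePart Y Cp Cm u)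


lemma integrable_fsub {α E : Type*} [MeasurableSpace α] [NormedAddCommGroup E] {μ : Measure α}
    {f g : α → E} (hf : Integrable f μ) (hg : Integrable g μ) :
    Integrable (fun x => f x - g x) μ := hf.sub hg

lemma integrable_fadd {α E : Type*} [MeasurableSpace α] [NormedAddCommGroup E] {μ : Measure α}
    {f g : α → E} (hf : Integrable f μ) (hg : Integrable g μ) :
    Integrable (fun x => f x + g x) μ := hf.add hg

lemma aux_exp_sub_one {z : ℂ} (hz : z.re ≤ 0) : ‖Complex.exp z - 1‖ ≤ ‖z‖ := by
  have hconv : Convex ℝ {w : ℂ | w.re ≤ 0} := convex_halfSpace_re_le 0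
  have := hconv.norm_image_sub_le_of_norm_hasDerivWithin_le (𝕜 := ℂ) (f := Complex.exp)
    (f' := Complex.exp) (C := 1) (x := 0) (y := z)
    (fun w _ => (Complex.hasDerivAt_exp w).hasDerivWithinAt)
    (fun w hw => by rw [Complex.norm_exp]; exact Real.exp_le_one_iff.mpr hw) (by simp) hz
  simpa using this

lemma aux_exp_sub_one_sub {z : ℂ} (hz : z.re ≤ 0) : ‖Complex.exp z - 1 - z‖ ≤ ‖z‖ ^ 2 := by
  have hconv : Convex ℝ ({w : ℂ | w.re ≤ 0} ∩ Metric.closedBall 0 ‖z‖) :=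
    (convex_halfSpace_re_le 0).inter (convex_closedBall _ _)
  have := hconv.norm_image_sub_le_of_norm_hasDerivWithin_le (𝕜 := ℂ)
    (f := fun w => Complex.exp w - w)
    (f' := fun w => Complex.exp w - 1) (C := ‖z‖) (x := 0) (y := z)
    (fun w _ => ((Complex.hasDerivAt_exp w).sub (hasDerivAt_id w)).hasDerivWithinAt)
    (fun w hw => (aux_exp_sub_one hw.1).trans (by simpa using hw.2)) (by simp)
    ⟨hz, by simp⟩
  have e : Complex.exp z - 1 - z = Complex.exp z - z - (Complex.exp 0 - 0) := by
    rw [Complex.exp_zero]; ring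
  rw [e, pow_two]
  simpa using this

/-- `F` has the Fourier representation with (rapidly decaying) density `G`. -/
structure FRep (F : ℝ → ℝ) (G : ℝ → ℂ) : Prop where
  cont : Continuous G
  int : Integrable (fun v : ℝ => (1 + v ^ 2) ^ 2 * ‖G v‖)
  rep : ∀ x : ℝ, (F x : ℂ) = ∫ v : ℝ, G v * Complex.exp (Complex.I * v * x)

lemma exists_FRep (F : ℝ → ℝ) (hF : ContDiff ℝ ((⊤ : ℕ∞) : WithTop ℕ∞) F) (hc : HasCompactSupport F) :
    ∃ G, FRep F G := by
  let Fc : ℝ → ℂ := fun x => (F x : ℂ)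
  have hFc : ContDiff ℝ ((⊤ : ℕ∞) : WithTop ℕ∞) Fc :=
    Complex.ofRealCLM.contDiff.comp hF
  have hcc : HasCompactSupport Fc := hc.comp_left (g := fun x : ℝ => (x : ℂ)) (by simp)
  let S : SchwartzMap ℝ ℂ := hcc.toSchwartzMap hFc
  let Gh : SchwartzMap ℝ ℂ := FourierTransform.fourier S
  have hinv : FourierTransformInv.fourierInv Gh = S := FourierTransform.fourierInv_fourier_eq S
  have h2 : ∀ x : ℝ, (F x : ℂ) = ∫ v : ℝ, Complex.exp (2 * π * (v * x : ℝ) * Complex.I) * Gh v := by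
    intro x
    have : (F x : ℂ) = S x := rfl
    rw [this, ← hinv, SchwartzMap.fourierInv_coe, Real.fourierInv_eq']
    congr 1
    ext v
    simp only [RCLike.inner_apply, conj_trivial, smul_eq_mul]
    congr 2
    push_cast; ring
  refine ⟨fun u => (2 * π)⁻¹ * Gh (u / (2 * π)), ?_, ?_, ?_⟩
  · exact continuous_const.mul (Gh.continuous.comp (by fun_prop))
  · have hp : (0:ℝ) < 2 * π := by positivity
    have i0 := Gh.integrable_pow_mul (μ := volume) 0
    have i2 := Gh.integrable_pow_mul (μ := volume) 2
    have i4 := Gh.integrable_pow_mul (μ := volume) 4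
    have hi : Integrable (fun w : ℝ => (2 * π)⁻¹ * ((1 + ((2 * π) * w) ^ 2) ^ 2 * ‖Gh w‖)) := by
      refine Integrable.const_mul ?_ _
      have := (i0.add (i2.const_mul (2 * (2 * π) ^ 2))).add (i4.const_mul ((2 * π) ^ 4))
      refine this.congr (Eventually.of_forall fun w => ?_)
      simp only [Pi.add_apply, Real.norm_eq_abs, pow_zero, sq_abs]
      rw [show |w| ^ 4 = w ^ 4 by rw [show (4:ℕ) = 2 * 2 by rfl, pow_mul, sq_abs, ← pow_mul]]
      ring
    have := hi.comp_div hp.ne'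
    refine this.congr (Eventually.of_forall fun w => ?_)
    simp only [norm_mul, norm_inv, Complex.norm_real, Real.norm_eq_abs,
      abs_of_pos Real.pi_pos]
    rw [mul_div_cancel₀ _ hp.ne']
    ring
  · intro x
    rw [h2 x]
    have := Measure.integral_comp_div
      (fun v : ℝ => Complex.exp (2 * π * (v * x : ℝ) * Complex.I) * Gh v) (2 * π)
    have hp : (0:ℝ) < 2 * π := by positivity
    rw [abs_of_pos hp] at this
    have hpi : (π : ℂ) ≠ 0 := by exact_mod_cast Real.pi_ne_zero
    calc _ = ((2 * π : ℝ)⁻¹ : ℂ) * ((2 * π : ℝ) • ∫ v : ℝ, Complex.exp (2 * π * (v * x : ℝ) * Complex.I) * Gh v) := by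
            generalize (∫ v : ℝ, Complex.exp (2 * π * (v * x : ℝ) * Complex.I) * Gh v) = Q
            rw [Complex.real_smul]; push_cast; field_simp
      _ = _ := by
            rw [← this, ← integral_const_mul]
            congr 1
            ext v
            have : (2 * π * ((v / (2 * π) * x : ℝ) : ℂ) * Complex.I) = Complex.I * v * x := by
              push_cast; field_simp
            rw [this]; push_cast; ring

namespace FRep
variable {F : ℝ → ℝ} {G : ℝ → ℂ}

lemma int2 (h : FRep F G) : Integrable (fun v : ℝ => (1 + v ^ 2) * ‖G v‖) := by
  refine h.int.mono' (by have := h.cont; fun_prop) (Eventually.of_forall fun v => ?_)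
  rw [Real.norm_of_nonneg (by positivity)]
  gcongr
  nlinarith [sq_nonneg v]

lemma intG (h : FRep F G) : Integrable G := by
  refine h.int2.mono' (by have := h.cont; fun_prop) (Eventually.of_forall fun v => ?_)
  nlinarith [norm_nonneg (G v), sq_nonneg v, mul_nonneg (sq_nonneg v) (norm_nonneg (G v))]

lemma intv (h : FRep F G) : Integrable (fun v : ℝ => G v * (Complex.I * v)) := by
  refine h.int2.mono' (by have := h.cont; fun_prop) (Eventually.of_forall fun v => ?_)
  simp only [norm_mul, Complex.norm_I, one_mul, Complex.norm_real, Real.norm_eq_abs]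
  rw [mul_comm]
  gcongr
  nlinarith [sq_nonneg (|v| - 1), sq_abs v]

lemma deriv_zero (h : FRep F G) (hd : HasDerivAt F 0 0) :
    ∫ v : ℝ, G v * (Complex.I * v) = 0 := by
  have key := hasDerivAt_integral_of_dominated_loc_of_deriv_le (μ := volume) (𝕜 := ℝ)
    (F := fun (x : ℝ) (v : ℝ) => G v * Complex.exp (Complex.I * v * x))
    (F' := fun (x : ℝ) (v : ℝ) => G v * (Complex.exp (Complex.I * v * x) * (Complex.I * v)))
    (x₀ := 0) (s := Set.univ) (bound := fun v => (1 + v ^ 2) * ‖G v‖) Filter.univ_mem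
    (Eventually.of_forall fun x => by have := h.cont; fun_prop)
    (by simpa using h.intG) (by have := h.cont; fun_prop)
    (Eventually.of_forall fun v x _ => by
      have : ‖Complex.exp (Complex.I * v * x)‖ = 1 := by
        rw [show Complex.I * v * x = ((v * x : ℝ) : ℂ) * Complex.I by push_cast; ring]
        exact Complex.norm_exp_ofReal_mul_I _
      simp only [norm_mul, this, Complex.norm_I, one_mul, Complex.norm_real, Real.norm_eq_abs]
      rw [mul_comm]
      gcongr
      nlinarith [sq_nonneg (|v| - 1), sq_abs v])
    h.int2
    (Eventually.of_forall fun v x _ => by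
      have h1 : HasDerivAt (fun x : ℝ => Complex.I * v * (x : ℂ)) (Complex.I * v) x := by
        simpa using (Complex.ofRealCLM.hasDerivAt (x := x)).const_mul (Complex.I * v)
      exact (h1.cexp).const_mul _)
  have h2 : HasDerivAt (fun x : ℝ => (F x : ℂ)) ((0 : ℝ) : ℂ) 0 := hd.ofReal_comp
  have h3 := key.2
  simp only [← h.rep] at h3
  have := h3.unique h2
  simpa using this

end FRep

/-- The Lévy kernel. -/
def lk (u x : ℝ) : ℂ :=
  Complex.exp (Complex.I * u * x) - 1 - (if |x| ≤ 1 then Complex.I * u * x else 0)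

/-- A general Lévy exponent (without Gaussian part). -/
def Psi (β : ℝ) (ρ : Measure ℝ) (u : ℝ) : ℂ := Complex.I * β * u + ∫ x : ℝ, lk u x ∂ρ

lemma psiJ_eq (b Y Cp Cm : ℝ) (q : ℝ → ℝ) (u : ℝ) :
    psiJ b Y Cp Cm q u = Psi b (levyMeasure Y Cp Cm q) u := rfl

/-- The comparison function `min(x², |x|)`. -/
def mfun (x : ℝ) : ℝ := min (x ^ 2) |x|

lemma mfun_nonneg (x : ℝ) : 0 ≤ mfun x := le_min (sq_nonneg x) (abs_nonneg x)

lemma continuous_mfun : Continuous mfun := by unfold mfun; fun_prop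

lemma mfun_of_le {x : ℝ} (h : |x| ≤ 1) : mfun x = x ^ 2 := by
  unfold mfun
  rw [min_eq_left]
  rw [← sq_abs]; nlinarith [abs_nonneg x]

lemma mfun_of_ge {x : ℝ} (h : 1 ≤ |x|) : mfun x = |x| := by
  unfold mfun
  rw [min_eq_right]
  rw [← sq_abs]; nlinarith [abs_nonneg x]

lemma measurable_lk : Measurable (fun p : ℝ × ℝ => lk p.1 p.2) := by
  unfold lk
  refine Measurable.sub (by fun_prop) (Measurable.ite ?_ (by fun_prop) (by fun_prop))
  exact measurableSet_le (by fun_prop) (by fun_prop)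

lemma norm_exp_I (u x : ℝ) : ‖Complex.exp (Complex.I * u * x)‖ = 1 := by
  rw [show Complex.I * u * x = ((u * x : ℝ) : ℂ) * Complex.I by push_cast; ring]
  exact Complex.norm_exp_ofReal_mul_I _

lemma norm_lk_le {ε : ℝ} (hε : 0 < ε) (hε1 : ε ≤ 1) (v x : ℝ) :
    ‖lk (v / ε) x‖ ≤ 3 * (1 + v ^ 2) * mfun (x / ε) := by
  unfold lk
  have hnI : ‖Complex.I * ((v / ε : ℝ) : ℂ) * x‖ = |v| * |x / ε| := by
    rw [norm_mul, norm_mul, Complex.norm_I, Complex.norm_real, Complex.norm_real, one_mul,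
      Real.norm_eq_abs, Real.norm_eq_abs, abs_div, abs_div, abs_of_pos hε]
    ring
  by_cases hx : |x| ≤ ε
  · have hx1 : |x / ε| ≤ 1 := by
      rw [abs_div, abs_of_pos hε]; exact (div_le_one hε).2 hx
    rw [if_pos (hx.trans hε1), mfun_of_le hx1]
    refine (aux_exp_sub_one_sub (by simp)).trans ?_
    rw [hnI, mul_pow, sq_abs, sq_abs]
    have := sq_nonneg v
    have := sq_nonneg (x / ε)
    nlinarith
  · push Not at hx
    have hx1 : 1 ≤ |x / ε| := by
      rw [abs_div, abs_of_pos hε]; exact (one_le_div hε).2 hx.le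
    rw [mfun_of_ge hx1]
    have h1 : ‖(if |x| ≤ 1 then Complex.I * ((v / ε : ℝ) : ℂ) * x else 0)‖ ≤ |v| * |x / ε| := by
      split_ifs
      · rw [hnI]
      · rw [norm_zero]; positivity
    have h2 : ‖Complex.exp (Complex.I * ((v / ε : ℝ) : ℂ) * x) - 1‖ ≤ 2 := by
      refine (norm_sub_le _ _).trans ?_
      rw [norm_exp_I]; norm_num
    refine (norm_sub_le _ _).trans ((add_le_add h2 h1).trans ?_)
    have : |v| ≤ 1 + v ^ 2 := by nlinarith [sq_nonneg (|v| - 1), sq_abs v]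
    nlinarith [mul_nonneg (sub_nonneg.2 this) (abs_nonneg (x/ε)), mul_nonneg (sq_nonneg v) (abs_nonneg (x/ε))]

lemma norm_lk_le_one (u x : ℝ) : ‖lk u x‖ ≤ 3 * (1 + u ^ 2) * mfun x := by
  simpa using norm_lk_le one_pos le_rfl u x

lemma integrable_lk {ρ : Measure ℝ} (hρ : Integrable mfun ρ) (u : ℝ) : Integrable (lk u) ρ := by
  refine (hρ.const_mul (3 * (1 + u ^ 2))).mono' ?_ (Eventually.of_forall fun x => norm_lk_le_one u x)
  exact (measurable_lk.comp (measurable_const.prodMk measurable_id)).aestronglyMeasurable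

lemma Psi_re_nonpos (β : ℝ) {ρ : Measure ℝ} (hρ : Integrable mfun ρ) (u : ℝ) :
    (Psi β ρ u).re ≤ 0 := by
  unfold Psi
  have h1 : (∫ x, lk u x ∂ρ).re = ∫ x, (lk u x).re ∂ρ := by
    have := integral_re (integrable_lk hρ u)
    simpa using this.symm
  have h2 : (Complex.I * β * u).re = 0 := by simp
  rw [Complex.add_re, h1, h2, zero_add]
  refine integral_nonpos fun x => ?_
  unfold lk
  have h3 : (Complex.exp (Complex.I * u * x)).re ≤ 1 := by
    have := Complex.re_le_norm (Complex.exp (Complex.I * u * x))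
    rwa [norm_exp_I] at this
  have h4 : (if |x| ≤ 1 then Complex.I * (u : ℂ) * x else 0).re = 0 := by
    split_ifs <;> simp
  rw [Complex.sub_re, Complex.sub_re, h4]
  simp; linarith

namespace FRep
variable {F : ℝ → ℝ} {G : ℝ → ℂ}

lemma integral_affine (hF : FRep F G) (M : Measure ℝ) [IsFiniteMeasure M] (c d : ℝ) :
    ((∫ x, F (c * x + d) ∂M : ℝ) : ℂ)
      = ∫ v : ℝ, G v * Complex.exp (Complex.I * v * d) * charFun M (c * v) := by
  rw [← integral_complex_ofReal]
  have hint : Integrable (fun p : ℝ × ℝ => G p.2 * Complex.exp (Complex.I * p.2 * (c * p.1 + d : ℝ)))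
      (M.prod volume) := by
    refine (hF.intG.norm.comp_snd M).mono' ?_ (Eventually.of_forall fun p => ?_)
    · have := hF.cont
      exact Continuous.aestronglyMeasurable (by fun_prop)
    · rw [norm_mul, norm_exp_I, mul_one]
  simp_rw [hF.rep]
  rw [integral_integral_swap hint]
  congr 1
  ext v
  rw [charFun_apply_real, ← integral_const_mul]
  congr 1
  ext x
  rw [mul_assoc (G v), ← Complex.exp_add]
  congr 2
  push_cast; ring

lemma integral_lk (hF : FRep F G) (hd : HasDerivAt F 0 0) (u x : ℝ) :
    ∫ v : ℝ, G v * lk (u * v) x = ((F (u * x) - F 0 : ℝ) : ℂ) := by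
  have e1 : ∀ v : ℝ, G v * lk (u * v) x = G v * Complex.exp (Complex.I * v * (u * x : ℝ))
      - G v * Complex.exp (Complex.I * v * (0 : ℝ))
      - (if |x| ≤ 1 then (u * x : ℂ) else 0) * (G v * (Complex.I * v)) := by
    intro v
    unfold lk
    simp only [Complex.ofReal_zero, mul_zero, Complex.exp_zero]
    rw [show Complex.I * (v : ℂ) * (u * x : ℝ) = Complex.I * (u * v : ℝ) * x by push_cast; ring]
    split_ifs
    · push_cast; ring
    · ring
  have hi : ∀ y : ℝ, Integrable (fun v : ℝ => G v * Complex.exp (Complex.I * v * y)) := by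
    intro y
    refine hF.intG.norm.mono' ?_ (Eventually.of_forall fun v => ?_)
    · have := hF.cont
      fun_prop
    · rw [norm_mul, norm_exp_I, mul_one]
  simp_rw [e1]
  rw [integral_sub (integrable_fsub (hi _) (hi _)) (hF.intv.const_mul _), integral_sub (hi _) (hi _),
    integral_const_mul, hF.deriv_zero hd, ← hF.rep, ← hF.rep]
  push_cast; ring

lemma integral_Psi (hF : FRep F G) (hd : HasDerivAt F 0 0) {ρ : Measure ℝ} [SFinite ρ]
    (β : ℝ) {ε : ℝ} (hε : 0 < ε) (hε1 : ε ≤ 1)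
    (hρ : Integrable (fun x => mfun (x / ε)) ρ) :
    ∫ v : ℝ, G v * Psi β ρ (ε⁻¹ * v) = ((∫ x, (F (ε⁻¹ * x) - F 0) ∂ρ : ℝ) : ℂ)
      ∧ Integrable (fun v : ℝ => G v * Psi β ρ (ε⁻¹ * v)) := by
  have hint : Integrable (fun p : ℝ × ℝ => G p.1 * lk (ε⁻¹ * p.1) p.2) (volume.prod ρ) := by
    refine ((hF.int2.mul_prod hρ).const_mul 3).mono' ?_ (Eventually.of_forall fun p => ?_)
    · have hm : Measurable G := hF.cont.measurable
      exact ((hm.comp measurable_fst).mul (measurable_lk.comp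
        ((measurable_const.mul measurable_fst).prodMk measurable_snd))).aestronglyMeasurable
    · rw [norm_mul]
      have := norm_lk_le hε hε1 p.1 p.2
      rw [show ε⁻¹ * p.1 = p.1 / ε by ring]
      calc _ ≤ ‖G p.1‖ * (3 * (1 + p.1 ^ 2) * mfun (p.2 / ε)) := by gcongr
        _ = _ := by ring
  have hint2 : Integrable (fun v : ℝ => ∫ x, G v * lk (ε⁻¹ * v) x ∂ρ) := hint.integral_prod_left
  have e : ∀ v : ℝ, G v * Psi β ρ (ε⁻¹ * v)
      = (β * ε⁻¹ : ℂ) * (G v * (Complex.I * v)) + ∫ x, G v * lk (ε⁻¹ * v) x ∂ρ := by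
    intro v
    unfold Psi
    rw [integral_const_mul]
    push_cast; ring
  simp_rw [e]
  refine ⟨?_, (hF.intv.const_mul _).add hint2⟩
  rw [integral_add (hF.intv.const_mul _) hint2, integral_const_mul, hF.deriv_zero hd, mul_zero,
    zero_add, integral_integral_swap hint, ← integral_complex_ofReal]
  congr 1
  ext x
  exact hF.integral_lk hd _ _

/-- First-order smoothness estimate. -/
lemma first_order (hF : FRep F G) {M : Measure ℝ} [IsProbabilityMeasure M]
    {ρ : Measure ℝ} (hρ1 : Integrable mfun ρ) {β s h ε B : ℝ} (hε : 0 < ε)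
    (hs : 0 ≤ s) (hh : 0 ≤ h)
    (hB : ∀ v : ℝ, ‖Psi β ρ (ε⁻¹ * v)‖ ≤ B * (1 + v ^ 2))
    (hM : ∀ u : ℝ, charFun M u = Complex.exp (-(s * u ^ 2 / 2 : ℝ) + h * Psi β ρ u)) (z : ℝ) :
    |(∫ y, F (ε⁻¹ * (z - y)) ∂M) - F (ε⁻¹ * z)|
      ≤ (∫ v : ℝ, (1 + v ^ 2) ^ 2 * ‖G v‖) * (h * B + s / ε ^ 2) := by
  have hB0 : 0 ≤ B := by
    have := (norm_nonneg _).trans (hB 0)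
    simpa using this
  have e1 : ((∫ y, F (ε⁻¹ * (z - y)) ∂M : ℝ) : ℂ)
      = ∫ v : ℝ, G v * Complex.exp (Complex.I * v * (ε⁻¹ * z : ℝ)) * charFun M (-ε⁻¹ * v) := by
    rw [← hF.integral_affine]
    congr 2
    ext y; congr 1; ring
  have hm : Measurable (charFun M) := measurable_charFun
  have hcont := hF.cont
  have hw : ∀ v : ℝ, ‖charFun M (-ε⁻¹ * v) - 1‖ ≤ (h * B + s / ε ^ 2) * (1 + v ^ 2) := by
    intro v
    rw [hM]
    refine (aux_exp_sub_one ?_).trans ((norm_add_le _ _).trans ?_)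
    · have := Psi_re_nonpos β hρ1 (-ε⁻¹ * v)
      rw [Complex.add_re, Complex.re_ofReal_mul, ← Complex.ofReal_neg, Complex.ofReal_re]
      have h1 : 0 ≤ s * (-ε⁻¹ * v) ^ 2 / 2 := by positivity
      nlinarith
    · rw [norm_neg, norm_mul, Complex.norm_real, Complex.norm_real, Real.norm_of_nonneg hh,
        Real.norm_of_nonneg (by positivity)]
      have h2 := hB (-v)
      rw [show ε⁻¹ * -v = -ε⁻¹ * v by ring, neg_sq] at h2
      have h3 : h * ‖Psi β ρ (-ε⁻¹ * v)‖ ≤ h * (B * (1 + v ^ 2)) := by gcongr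
      have h4 : s * (-ε⁻¹ * v) ^ 2 / 2 = (s / ε ^ 2) * (v ^ 2 / 2) := by field_simp
      have h5 : 0 ≤ s / ε ^ 2 := by positivity
      rw [h4]
      nlinarith [mul_nonneg h5 (sq_nonneg v)]
  have hi1 : Integrable (fun v : ℝ => G v * Complex.exp (Complex.I * v * (ε⁻¹ * z : ℝ)) * charFun M (-ε⁻¹ * v)) := by
    refine hF.intG.norm.mono' ?_ (Eventually.of_forall fun v => ?_)
    · exact (Continuous.aestronglyMeasurable (by fun_prop)).mul
        (hm.comp (measurable_const.mul measurable_id)).aestronglyMeasurable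
    · rw [norm_mul, norm_mul, norm_exp_I, mul_one]
      exact mul_le_of_le_one_right (norm_nonneg _) (norm_charFun_le_one _)
  have hi2 : Integrable (fun v : ℝ => G v * Complex.exp (Complex.I * v * (ε⁻¹ * z : ℝ))) := by
    refine hF.intG.norm.mono' ?_ (Eventually.of_forall fun v => ?_)
    · exact (Continuous.aestronglyMeasurable (by fun_prop))
    · rw [norm_mul, norm_exp_I, mul_one]
  rw [← Real.norm_eq_abs, ← Complex.norm_real, Complex.ofReal_sub, e1, hF.rep (ε⁻¹ * z),
    ← integral_sub hi1 hi2, ← integral_mul_const]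
  refine norm_integral_le_of_norm_le (hF.int.mul_const _) (Eventually.of_forall fun v => ?_)
  rw [← mul_sub_one, norm_mul, norm_mul, norm_exp_I, mul_one]
  have h7 : (1 + v ^ 2) ≤ (1 + v ^ 2) ^ 2 := by nlinarith [sq_nonneg v, sq_nonneg (v ^ 2)]
  have h8 : 0 ≤ h * B + s / ε ^ 2 := by positivity
  calc _ ≤ ‖G v‖ * ((h * B + s / ε ^ 2) * (1 + v ^ 2)) := by gcongr; exact hw v
    _ ≤ ‖G v‖ * ((h * B + s / ε ^ 2) * (1 + v ^ 2) ^ 2) := by gcongr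
    _ = _ := by ring

/-- Second-order estimate. -/
lemma second_order (hF : FRep F G) (hd : HasDerivAt F 0 0) {M : Measure ℝ} [IsProbabilityMeasure M]
    {ρ : Measure ℝ} [SFinite ρ] (hρ1 : Integrable mfun ρ) {β h ε B : ℝ} {s : ℝ≥0} (hε : 0 < ε)
    (hε1 : ε ≤ 1) (hρ : Integrable (fun x => mfun (x / ε)) ρ) (hh : 0 ≤ h)
    (hB : ∀ v : ℝ, ‖Psi β ρ (ε⁻¹ * v)‖ ≤ B * (1 + v ^ 2))
    (hM : ∀ u : ℝ, charFun M u = Complex.exp (-(s * u ^ 2 / 2 : ℝ) + h * Psi β ρ u)) :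
    |(∫ y, F (ε⁻¹ * y) ∂M) - (∫ y, F (ε⁻¹ * y) ∂(gaussianReal 0 s))
        - h * ∫ x, (F (ε⁻¹ * x) - F 0) ∂ρ|
      ≤ (∫ v : ℝ, (1 + v ^ 2) ^ 2 * ‖G v‖) * (h * B * (h * B + s / ε ^ 2)) := by
  have hB0 : 0 ≤ B := by
    have := (norm_nonneg _).trans (hB 0)
    simpa using this
  have hcont := hF.cont
  have e1 : ∀ (N : Measure ℝ) [IsProbabilityMeasure N], ((∫ y, F (ε⁻¹ * y) ∂N : ℝ) : ℂ)
      = ∫ v : ℝ, G v * charFun N (ε⁻¹ * v) := by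
    intro N _
    have := hF.integral_affine N ε⁻¹ 0
    simpa using this
  have hi1 : ∀ (N : Measure ℝ) [IsProbabilityMeasure N],
      Integrable (fun v : ℝ => G v * charFun N (ε⁻¹ * v)) := by
    intro N _
    refine hF.intG.norm.mono' ?_ (Eventually.of_forall fun v => ?_)
    · exact (Continuous.aestronglyMeasurable (by fun_prop)).mul
        (measurable_charFun.comp (measurable_const.mul measurable_id)).aestronglyMeasurable
    · rw [norm_mul]
      exact mul_le_of_le_one_right (norm_nonneg _) (norm_charFun_le_one _)
  obtain ⟨e2, hi2⟩ := hF.integral_Psi hd β hε hε1 hρ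
  rw [← Real.norm_eq_abs, ← Complex.norm_real, Complex.ofReal_sub, Complex.ofReal_sub,
    Complex.ofReal_mul, e1 M, e1 (gaussianReal 0 s), ← e2, ← integral_const_mul,
    ← integral_sub (hi1 _) (hi1 _), ← integral_sub (integrable_fsub (hi1 _) (hi1 _)) (hi2.const_mul _),
    ← integral_mul_const]
  refine norm_integral_le_of_norm_le (hF.int.mul_const _) (Eventually.of_forall fun v => ?_)
  set u := ε⁻¹ * v with hu
  set g : ℂ := -(s * u ^ 2 / 2 : ℝ) with hg
  set w : ℂ := h * Psi β ρ u with hw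
  have hgauss : charFun (gaussianReal 0 s) u = Complex.exp g := by
    rw [charFun_gaussianReal, hg]
    congr 1
    push_cast; ring
  have hgre : g.re ≤ 0 := by
    rw [hg, ← Complex.ofReal_neg, Complex.ofReal_re]
    have : 0 ≤ s * u ^ 2 / 2 := by positivity
    linarith
  have hwre : w.re ≤ 0 := by
    have := Psi_re_nonpos β hρ1 u
    rw [hw, Complex.re_ofReal_mul]
    nlinarith
  have hgn : ‖g‖ ≤ (s / ε ^ 2) * (1 + v ^ 2) := by
    rw [hg, norm_neg, Complex.norm_real, Real.norm_of_nonneg (by positivity)]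
    have h4 : s * u ^ 2 / 2 = (s / ε ^ 2) * (v ^ 2 / 2) := by rw [hu]; field_simp
    have h5 : 0 ≤ s / ε ^ 2 := by positivity
    rw [h4]
    nlinarith [mul_nonneg h5 (sq_nonneg v)]
  have hwn : ‖w‖ ≤ (h * B) * (1 + v ^ 2) := by
    rw [hw, norm_mul, Complex.norm_real, Real.norm_of_nonneg hh, mul_assoc]
    gcongr
    exact hB v
  have hge : ‖Complex.exp g‖ ≤ 1 := by
    rw [Complex.norm_exp]; exact Real.exp_le_one_iff.2 hgre
  have key : ‖Complex.exp (g + w) - Complex.exp g - w‖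
      ≤ (h * B) * (1 + v ^ 2) * ((h * B) * (1 + v ^ 2) + (s / ε ^ 2) * (1 + v ^ 2)) := by
    have : Complex.exp (g + w) - Complex.exp g - w
        = Complex.exp g * (Complex.exp w - 1 - w) + (Complex.exp g - 1) * w := by
      rw [Complex.exp_add]; ring
    rw [this]
    refine (norm_add_le _ _).trans ?_
    rw [norm_mul, norm_mul]
    have a1 : ‖Complex.exp g‖ * ‖Complex.exp w - 1 - w‖ ≤ 1 * ‖w‖ ^ 2 := by
      gcongr; exact aux_exp_sub_one_sub hwre
    have a2 : ‖Complex.exp g - 1‖ * ‖w‖ ≤ ‖g‖ * ‖w‖ := by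
      gcongr; exact aux_exp_sub_one hgre
    calc _ ≤ 1 * ‖w‖ ^ 2 + ‖g‖ * ‖w‖ := add_le_add a1 a2
      _ = ‖w‖ * (‖w‖ + ‖g‖) := by ring
      _ ≤ _ := by gcongr
  have e3 : G v * charFun M u - G v * charFun (gaussianReal 0 s) u - h * (G v * Psi β ρ u)
      = G v * (Complex.exp (g + w) - Complex.exp g - w) := by
    rw [hM, hgauss, hw]; ring
  change ‖G v * charFun M u - G v * charFun (gaussianReal 0 s) u - h * (G v * Psi β ρ u)‖ ≤ _
  rw [e3, norm_mul]
  calc _ ≤ ‖G v‖ * _ := mul_le_mul_of_nonneg_left key (norm_nonneg _)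
    _ = _ := by ring

end FRep

theorem exists_prob_of_tendsto {μ : ℕ → Measure ℝ} [∀ i, IsProbabilityMeasure (μ i)]
    {f : ℝ → ℂ} (hf : ContinuousAt f 0)
    (h : ∀ t, Tendsto (fun n => charFun (μ n) t) atTop (𝓝 (f t))) :
    ∃ T : Measure ℝ, IsProbabilityMeasure T ∧ ∀ t, charFun T t = f t := by
  have ht : IsTightMeasureSet (Set.range μ) := isTightMeasureSet_of_tendsto_charFun hf h
  let m : ℕ → ProbabilityMeasure ℝ := fun n => ⟨μ n, inferInstance⟩
  have h_compact : IsCompact (closure {ρ | ∃ n, m n = ρ}) := by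
    apply isCompact_closure_of_isTightMeasureSet
    refine ht.subset ?_
    rintro _ ⟨ρ, ⟨n, rfl⟩, rfl⟩
    exact ⟨n, rfl⟩
  let U : Ultrafilter ℕ := Filter.hyperfilter ℕ
  have hU : (U : Filter ℕ) ≤ atTop := by
    have := Filter.hyperfilter_le_cofinite (α := ℕ)
    rwa [Nat.cofinite_eq_atTop] at this
  obtain ⟨T, -, hT⟩ := h_compact.ultrafilter_le_nhds (U.map m)
    (.trans (by simp) (monotone_principal subset_closure))
  have hT' : Tendsto m U (𝓝 T) := hT
  refine ⟨T, inferInstance, fun t => ?_⟩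
  rw [ProbabilityMeasure.tendsto_iff_forall_integral_rclike_tendsto ℂ] at hT'
  have h1 := hT' (BoundedContinuousFunction.innerProbChar t)
  simp_rw [← charFun_eq_integral_innerProbChar] at h1
  exact tendsto_nhds_unique h1 ((h t).mono_left hU)

/-- convolution powers -/
def convPow (ρ : Measure ℝ) : ℕ → Measure ℝ
  | 0 => Measure.dirac 0
  | n + 1 => (convPow ρ n) ∗ ρ

instance convPow_finite (ρ : Measure ℝ) [IsFiniteMeasure ρ] (n : ℕ) :
    IsFiniteMeasure (convPow ρ n) := by
  induction n with
  | zero => simp only [convPow]; infer_instance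
  | succ n ih => simp only [convPow]; infer_instance

theorem charFun_convPow (ρ : Measure ℝ) [IsFiniteMeasure ρ] (n : ℕ) (u : ℝ) :
    charFun (convPow ρ n) u = (charFun ρ u) ^ n := by
  induction n with
  | zero => simp [convPow, charFun_dirac]
  | succ n ih => simp only [convPow, charFun_conv, ih, pow_succ]

/-- two or more jumps -/
def jumpRest (ρ : Measure ℝ) : Measure ℝ :=
  Measure.sum fun n : ℕ => ENNReal.ofReal (((n + 2).factorial : ℝ)⁻¹) • convPow ρ (n + 2)

theorem real_convPow (ρ : Measure ℝ) [IsFiniteMeasure ρ] (n : ℕ) :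
    (convPow ρ n).real univ = (ρ.real univ) ^ n := by
  have := charFun_convPow ρ n 0
  simp only [charFun_zero] at this
  exact_mod_cast this

theorem hasSum_exp_tail (z : ℂ) :
    HasSum (fun n : ℕ => (((n + 2).factorial : ℝ)⁻¹ : ℂ) * z ^ (n + 2)) (Complex.exp z - 1 - z) := by
  have h := NormedSpace.expSeries_div_hasSum_exp z
  rw [← Complex.exp_eq_exp_ℂ] at h
  rw [← hasSum_nat_add_iff' 2] at h
  simp only [Finset.sum_range_succ, Finset.sum_range_zero] at h
  have e1 : (fun n : ℕ => (((n + 2).factorial : ℝ)⁻¹ : ℂ) * z ^ (n + 2))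
      = fun n : ℕ => z ^ (n + 2) / ((n + 2).factorial : ℂ) := by
    ext n
    push_cast
    rw [div_eq_inv_mul]
  have e2 : Complex.exp z - 1 - z = Complex.exp z - (0 + z ^ 0 / ((Nat.factorial 0 : ℕ) : ℂ)
      + z ^ 1 / ((Nat.factorial 1 : ℕ) : ℂ)) := by
    simp; ring
  rw [e1, e2]
  exact h

theorem hasSum_exp_tail_real (z : ℝ) :
    HasSum (fun n : ℕ => (((n + 2).factorial : ℝ)⁻¹ ) * z ^ (n + 2)) (Real.exp z - 1 - z) := by
  have := hasSum_exp_tail z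
  rw [← Complex.hasSum_ofReal]
  push_cast at this ⊢
  exact this

theorem jumpRest_univ (ρ : Measure ℝ) [IsFiniteMeasure ρ] :
    jumpRest ρ univ = ENNReal.ofReal (Real.exp (ρ.real univ) - 1 - ρ.real univ) := by
  have h := hasSum_exp_tail_real (ρ.real univ)
  unfold jumpRest
  rw [Measure.sum_apply _ MeasurableSet.univ, ← h.tsum_eq,
    ENNReal.ofReal_tsum_of_nonneg (fun n => by positivity) h.summable]
  congr 1
  ext n
  rw [Measure.smul_apply, smul_eq_mul, ENNReal.ofReal_mul (by positivity), ← real_convPow,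
    ofReal_measureReal]

instance jumpRest_finite (ρ : Measure ℝ) [IsFiniteMeasure ρ] : IsFiniteMeasure (jumpRest ρ) :=
  ⟨by rw [jumpRest_univ]; exact ENNReal.ofReal_lt_top⟩

theorem real_jumpRest (ρ : Measure ℝ) [IsFiniteMeasure ρ] :
    (jumpRest ρ).real univ = Real.exp (ρ.real univ) - 1 - ρ.real univ := by
  rw [measureReal_def, jumpRest_univ, ENNReal.toReal_ofReal]
  have := Real.add_one_le_exp (ρ.real univ)
  linarith

theorem charFun_jumpRest (ρ : Measure ℝ) [IsFiniteMeasure ρ] (u : ℝ) :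
    charFun (jumpRest ρ) u = Complex.exp (charFun ρ u) - 1 - charFun ρ u := by
  have hint : Integrable (BoundedContinuousFunction.innerProbChar u) (jumpRest ρ) :=
    BoundedContinuousFunction.integrable _ _
  have h1 := hasSum_integral_measure hint
  rw [charFun_eq_integral_innerProbChar]
  refine h1.unique ?_
  have h2 := hasSum_exp_tail (charFun ρ u)
  refine h2.congr_fun ?_
  intro n
  rw [integral_smul_measure, ← charFun_eq_integral_innerProbChar, charFun_convPow,
    ENNReal.toReal_ofReal (by positivity)]
  simp

/-- compound Poisson law with (finite) jump measure `ρ` -/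
def compPois (ρ : Measure ℝ) : Measure ℝ :=
  ENNReal.ofReal (Real.exp (-ρ.real univ)) • (Measure.dirac 0 + ρ + jumpRest ρ)

instance compPois_finite (ρ : Measure ℝ) [IsFiniteMeasure ρ] : IsFiniteMeasure (compPois ρ) := by
  unfold compPois
  exact Measure.smul_finite _ ENNReal.ofReal_ne_top

theorem charFun_compPois (ρ : Measure ℝ) [IsFiniteMeasure ρ] (u : ℝ) :
    charFun (compPois ρ) u = Complex.exp (charFun ρ u - ρ.real univ) := by
  have hint : ∀ m : Measure ℝ, IsFiniteMeasure m →
      Integrable (BoundedContinuousFunction.innerProbChar u) m := fun m _ =>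
    BoundedContinuousFunction.integrable _ _
  rw [charFun_eq_integral_innerProbChar, compPois, integral_smul_measure,
    integral_add_measure (hint _ inferInstance) (hint _ inferInstance),
    integral_add_measure (hint _ inferInstance) (hint _ inferInstance)]
  simp only [← charFun_eq_integral_innerProbChar]
  rw [charFun_jumpRest, charFun_dirac, ENNReal.toReal_ofReal (by positivity),
    sub_eq_neg_add (charFun ρ u) (ρ.real univ : ℂ), Complex.exp_add]
  simp only [inner_zero_left, Complex.ofReal_zero, zero_mul, Complex.exp_zero]
  rw [Complex.real_smul, Complex.ofReal_exp]
  push_cast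
  ring

theorem prob_of_charFun_zero (ρ : Measure ℝ) [IsFiniteMeasure ρ] (h : charFun ρ 0 = 1) :
    IsProbabilityMeasure ρ := by
  rw [charFun_zero] at h
  have h' : ρ.real univ = 1 := by exact_mod_cast h
  exact ⟨by rwa [measureReal_def, ENNReal.toReal_eq_one_iff] at h'⟩

instance compPois_prob (ρ : Measure ℝ) [IsFiniteMeasure ρ] : IsProbabilityMeasure (compPois ρ) := by
  apply prob_of_charFun_zero
  rw [charFun_compPois, charFun_zero, sub_self, Complex.exp_zero]

/-- truncation function -/
def trunc (x : ℝ) : ℝ := if |x| ≤ 1 then x else 0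

theorem measurable_trunc : Measurable trunc := by
  unfold trunc
  exact Measurable.ite (measurableSet_le (by fun_prop) (by fun_prop)) measurable_id measurable_const

theorem abs_trunc_le_one (x : ℝ) : |trunc x| ≤ 1 := by
  unfold trunc
  split_ifs with h
  · exact h
  · simp

theorem abs_trunc_le (x : ℝ) : |trunc x| ≤ |x| := by
  unfold trunc
  split_ifs with h
  · exact le_rfl
  · simp

theorem integrable_trunc (ρ : Measure ℝ) [IsFiniteMeasure ρ] : Integrable trunc ρ :=
  (integrable_const (1 : ℝ)).mono' measurable_trunc.aestronglyMeasurable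
    (Eventually.of_forall abs_trunc_le_one)

theorem charFun_eq_integral_I (ρ : Measure ℝ) (u : ℝ) :
    charFun ρ u = ∫ x : ℝ, Complex.exp (Complex.I * u * x) ∂ρ := by
  rw [charFun_apply_real]
  congr 1
  ext x
  congr 1
  ring

theorem integrable_exp_I (ρ : Measure ℝ) [IsFiniteMeasure ρ] (u : ℝ) :
    Integrable (fun x : ℝ => Complex.exp (Complex.I * u * x)) ρ := by
  refine (integrable_const (1 : ℝ)).mono' (by fun_prop)
    (Eventually.of_forall fun x => (norm_exp_I u x).le)

theorem integral_lk_finite (ρ : Measure ℝ) [IsFiniteMeasure ρ] (u : ℝ) :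
    ∫ x, lk u x ∂ρ = charFun ρ u - ρ.real univ - Complex.I * (∫ x, trunc x ∂ρ : ℝ) * u := by
  have e : ∀ x, lk u x = Complex.exp (Complex.I * u * x) - 1 - (Complex.I * u) * (trunc x : ℂ) := by
    intro x
    unfold lk trunc
    split_ifs <;> simp
  simp_rw [e]
  have hi := integrable_exp_I ρ u
  have ht : Integrable (fun x => (Complex.I * u) * (trunc x : ℂ)) ρ :=
    ((integrable_trunc ρ).ofReal).const_mul _
  rw [integral_sub (integrable_fsub hi (integrable_const _)) ht, integral_sub hi (integrable_const _),
    integral_const_mul, integral_complex_ofReal, charFun_eq_integral_I]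
  simp
  ring

theorem Psi_split (β : ℝ) {ρ : Measure ℝ} (hρ : Integrable mfun ρ) {S : Set ℝ}
    (hS : MeasurableSet S) [IsFiniteMeasure (ρ.restrict S)] (u : ℝ) :
    Psi β ρ u = Psi (β - ∫ x in S, trunc x ∂ρ) (ρ.restrict Sᶜ) u
      + (charFun (ρ.restrict S) u - (ρ.restrict S).real univ) := by
  unfold Psi
  rw [← integral_add_compl hS (integrable_lk hρ u), integral_lk_finite]
  push_cast
  ring

theorem finite_restrict {ρ : Measure ℝ} (hρ : Integrable mfun ρ) {a : ℝ} (ha : 0 < a) :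
    IsFiniteMeasure (ρ.restrict {x | a < |x|}) := by
  refine ⟨?_⟩
  rw [Measure.restrict_apply MeasurableSet.univ, univ_inter]
  have h := hρ.measure_norm_ge_lt_top (ε := min (a ^ 2) a) (by positivity)
  refine lt_of_le_of_lt (measure_mono ?_) h
  intro x hx
  simp only [mem_ofPred_eq] at hx ⊢
  rw [Real.norm_of_nonneg (mfun_nonneg x)]
  refine min_le_min ?_ hx.le
  rw [← sq_abs x]
  gcongr

theorem continuousAt_Psi (β : ℝ) {ρ : Measure ℝ} (hρ : Integrable mfun ρ) :
    ContinuousAt (Psi β ρ) 0 := by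
  unfold Psi
  refine ContinuousAt.add (by fun_prop) ?_
  refine continuousAt_of_dominated (bound := fun x => 3 * (1 + 1 ^ 2) * mfun x) ?_ ?_ ?_ ?_
  · exact Eventually.of_forall fun u => (integrable_lk hρ u).aestronglyMeasurable
  · filter_upwards [Metric.ball_mem_nhds (0 : ℝ) one_pos] with u hu
    refine Eventually.of_forall fun x => (norm_lk_le_one u x).trans ?_
    have hu' : |u| ≤ 1 := by simpa using (mem_ball_zero_iff.1 hu).le
    have : u ^ 2 ≤ 1 ^ 2 := by rw [← sq_abs u]; gcongr
    have := mfun_nonneg x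
    gcongr
  · exact hρ.const_mul _
  · refine Eventually.of_forall fun x => ?_
    unfold lk
    split_ifs <;> fun_prop

theorem lk_zero (u : ℝ) : lk u 0 = 0 := by simp [lk]

theorem exists_levy (β : ℝ) {ρ : Measure ℝ} (hρ : Integrable mfun ρ) :
    ∃ T : Measure ℝ, IsProbabilityMeasure T ∧ ∀ u, charFun T u = Complex.exp (Psi β ρ u) := by
  let S : ℕ → Set ℝ := fun n => {x | 1 / ((n : ℝ) + 1) < |x|}
  have hSm : ∀ n, MeasurableSet (S n) := fun n => measurableSet_lt (by fun_prop) (by fun_prop)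
  have hfin : ∀ n, IsFiniteMeasure (ρ.restrict (S n)) := fun n => finite_restrict hρ (by positivity)
  let μ : ℕ → Measure ℝ := fun n =>
    (compPois (ρ.restrict (S n))).map (· + (β - ∫ x in S n, trunc x ∂ρ))
  have hμ : ∀ n, IsProbabilityMeasure (μ n) := fun n =>
    Measure.isProbabilityMeasure_map (by fun_prop)
  have hc : ∀ n u, charFun (μ n) u = Complex.exp (Psi β (ρ.restrict (S n)) u) := by
    intro n u
    simp only [μ]
    rw [charFun_map_add_const, charFun_compPois, Psi, integral_lk_finite, ← Complex.exp_add]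
    congr 1
    simp
    ring
  refine exists_prob_of_tendsto (μ := μ) (Complex.continuous_exp.continuousAt.comp
    (continuousAt_Psi β hρ)) fun u => ?_
  simp_rw [hc]
  refine (Complex.continuous_exp.tendsto _).comp ?_
  unfold Psi
  refine tendsto_const_nhds.add ?_
  have hmono : Monotone S := by
    intro m n hmn x hx
    simp only [S, mem_ofPred_eq] at hx ⊢
    refine lt_of_le_of_lt ?_ hx
    gcongr
  have h1 := tendsto_setIntegral_of_monotone (μ := ρ) hSm hmono (integrable_lk hρ u).integrableOn
  have h2 : ∫ x in ⋃ n, S n, lk u x ∂ρ = ∫ x, lk u x ∂ρ := by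
    apply setIntegral_eq_integral_of_forall_compl_eq_zero
    intro x hx
    by_cases h0 : x = 0
    · rw [h0, lk_zero]
    · exfalso
      apply hx
      obtain ⟨n, hn⟩ := exists_nat_one_div_lt (abs_pos.2 h0)
      exact mem_iUnion.2 ⟨n, hn⟩
  rw [h2] at h1
  exact h1

theorem Psi_smul (β : ℝ) (ρ : Measure ℝ) {h : ℝ} (hh : 0 ≤ h) (u : ℝ) :
    Psi (h * β) (ENNReal.ofReal h • ρ) u = h * Psi β ρ u := by
  unfold Psi
  rw [integral_smul_measure, ENNReal.toReal_ofReal hh, Complex.real_smul]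
  push_cast
  ring

theorem exists_levy_smul (β : ℝ) {ρ : Measure ℝ} (hρ : Integrable mfun ρ) {h : ℝ} (hh : 0 ≤ h) :
    ∃ T : Measure ℝ, IsProbabilityMeasure T ∧ ∀ u, charFun T u = Complex.exp (h * Psi β ρ u) := by
  obtain ⟨T, hT, h1⟩ := exists_levy (h * β) (hρ.smul_measure (c := ENNReal.ofReal h) ENNReal.ofReal_ne_top)
  exact ⟨T, hT, fun u => by rw [h1, Psi_smul β ρ hh]⟩

theorem levyDensity_nonneg {Y Cp Cm : ℝ} {q : ℝ → ℝ} (hCp : 0 < Cp) (hCm : 0 < Cm)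
    (hq : ∀ x, 0 ≤ q x) (x : ℝ) : 0 ≤ levyDensity Y Cp Cm q x := by
  unfold levyDensity
  have h1 : (0 : ℝ) ≤ (if 0 < x then Cp else if x < 0 then Cm else 0) := by
    split_ifs <;> linarith
  have := hq x
  positivity

theorem measurable_levyDensity {Y Cp Cm : ℝ} {q : ℝ → ℝ} (hq : Measurable q) :
    Measurable (levyDensity Y Cp Cm q) := by
  unfold levyDensity
  have h1 : Measurable fun x : ℝ => (if 0 < x then Cp else if x < 0 then Cm else 0) :=
    Measurable.ite measurableSet_Ioi measurable_const
      (Measurable.ite measurableSet_Iio measurable_const measurable_const)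
  fun_prop

theorem levyDensity_le {Y Cp Cm Q : ℝ} {q : ℝ → ℝ} (hCp : 0 < Cp) (hCm : 0 < Cm)
    (hq : ∀ x, 0 ≤ q x) (hQ : ∀ x, q x ≤ Q) (x : ℝ) :
    levyDensity Y Cp Cm q x ≤ (Cp + Cm) * Q * |x| ^ (-1 - Y) := by
  unfold levyDensity
  have h1 : (if 0 < x then Cp else if x < 0 then Cm else 0) ≤ Cp + Cm := by
    split_ifs <;> linarith
  have := hq x
  have := hQ x
  gcongr

theorem levyDensity_mul (Y Cp Cm : ℝ) (q : ℝ → ℝ) (x : ℝ) :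
    levyDensity Y Cp Cm q x = q x * levyDensity Y Cp Cm (fun _ => 1) x := by
  unfold levyDensity; ring

theorem integral_levy {Y Cp Cm : ℝ} {q : ℝ → ℝ} (hCp : 0 < Cp) (hCm : 0 < Cm)
    (hq : ∀ x, 0 ≤ q x) (hqm : Measurable q) (f : ℝ → ℝ) :
    ∫ x, f x ∂(levyMeasure Y Cp Cm q) = ∫ x, levyDensity Y Cp Cm q x * f x := by
  unfold levyMeasure
  rw [integral_withDensity_eq_integral_toReal_smul
    (measurable_levyDensity hqm).ennreal_ofReal (Eventually.of_forall fun x => ENNReal.ofReal_lt_top)]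
  congr 1
  ext x
  rw [ENNReal.toReal_ofReal (levyDensity_nonneg hCp hCm hq x), smul_eq_mul]

theorem integrable_levy {Y Cp Cm : ℝ} {q : ℝ → ℝ} (hCp : 0 < Cp) (hCm : 0 < Cm)
    (hq : ∀ x, 0 ≤ q x) (hqm : Measurable q) (f : ℝ → ℝ) :
    Integrable f (levyMeasure Y Cp Cm q) ↔ Integrable (fun x => levyDensity Y Cp Cm q x * f x) := by
  unfold levyMeasure
  rw [integrable_withDensity_iff_integrable_smul'
    (measurable_levyDensity hqm).ennreal_ofReal (Eventually.of_forall fun x => ENNReal.ofReal_lt_top)]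
  simp_rw [ENNReal.toReal_ofReal (levyDensity_nonneg hCp hCm hq _), smul_eq_mul]

instance levy_sfinite (Y Cp Cm : ℝ) (q : ℝ → ℝ) : SFinite (levyMeasure Y Cp Cm q) := by
  unfold levyMeasure; infer_instance

theorem integrable_of_even {f : ℝ → ℝ} (he : ∀ x, f (-x) = f x) (hf : IntegrableOn f (Ioi 0)) :
    Integrable f := by
  have h2 : IntegrableOn f (Iic 0) := by
    rw [integrableOn_Iic_iff_integrableOn_Iio]
    have := hf.comp_neg
    simp only [he] at this
    simpa using this
  have := h2.union hf
  rwa [Iic_union_Ioi, integrableOn_univ] at this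

theorem integrable_mfun_rpow {Y : ℝ} (hY1 : 1 < Y) (hY2 : Y < 2) :
    Integrable (fun x : ℝ => mfun x * |x| ^ (-1 - Y)) := by
  apply integrable_of_even
  · intro x; simp [mfun]
  · rw [← Ioc_union_Ioi_eq_Ioi (zero_le_one (α := ℝ))]
    apply IntegrableOn.union
    · have h := (intervalIntegral.intervalIntegrable_rpow' (a := 0) (b := 1) (r := 1 - Y)
        (by linarith))
      rw [intervalIntegrable_iff_integrableOn_Ioc_of_le zero_le_one] at h
      refine h.congr_fun ?_ measurableSet_Ioc
      intro x hx
      have hx0 : 0 < x := hx.1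
      simp only
      rw [mfun_of_le (by rw [abs_of_pos hx0]; exact hx.2), abs_of_pos hx0, ← Real.rpow_natCast,
        ← Real.rpow_add hx0]
      congr 1; push_cast; ring
    · refine (integrableOn_Ioi_rpow_of_lt (a := -Y) (by linarith) one_pos).congr_fun ?_
        measurableSet_Ioi
      intro x hx
      have hx1 : 1 < x := hx
      have hx0 : 0 < x := by linarith
      simp only
      rw [mfun_of_ge (by rw [abs_of_pos hx0]; exact hx1.le), abs_of_pos hx0]
      nth_rewrite 2 [← Real.rpow_one x]
      rw [← Real.rpow_add hx0]
      congr 1; ring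

theorem scale_rpow {Y ε : ℝ} (hε : 0 < ε) (x : ℝ) :
    |x| ^ (-1 - Y) = ε ^ (-1 - Y) * |ε⁻¹ * x| ^ (-1 - Y) := by
  rw [← Real.mul_rpow hε.le (abs_nonneg _)]
  congr 1
  rw [abs_mul, abs_of_pos (inv_pos.2 hε)]
  field_simp

/-- the constant `∫ min(y²,|y|)|y|^{-1-Y} dy` -/
def Km (Y : ℝ) : ℝ := ∫ x : ℝ, mfun x * |x| ^ (-1 - Y)

theorem Km_nonneg (Y : ℝ) : 0 ≤ Km Y :=
  integral_nonneg fun x => mul_nonneg (mfun_nonneg x) (by positivity)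

theorem mfun_scaled {Y ε : ℝ} (hY1 : 1 < Y) (hY2 : Y < 2) (hε : 0 < ε) :
    Integrable (fun x : ℝ => mfun (x / ε) * |x| ^ (-1 - Y)) ∧
      ∫ x : ℝ, mfun (x / ε) * |x| ^ (-1 - Y) = Km Y * ε ^ (-Y) := by
  have e : (fun x : ℝ => mfun (x / ε) * |x| ^ (-1 - Y))
      = fun x => ε ^ (-1 - Y) * (fun y => mfun y * |y| ^ (-1 - Y)) (ε⁻¹ * x) := by
    ext x
    rw [scale_rpow hε x]
    simp only [div_eq_inv_mul]
    ring
  rw [e]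
  constructor
  · exact ((integrable_mfun_rpow hY1 hY2).comp_mul_left' (by positivity)).const_mul _
  · rw [integral_const_mul,
      Measure.integral_comp_mul_left (fun y : ℝ => mfun y * |y| ^ (-1 - Y)) ε⁻¹, inv_inv, abs_of_pos hε, smul_eq_mul,
      Km, ← mul_assoc, mul_comm]
    congr 1
    nth_rewrite 2 [← Real.rpow_one ε]
    rw [← Real.rpow_add hε]
    congr 1; ring

theorem levy_mfun {Y Cp Cm Q ε : ℝ} {q : ℝ → ℝ} (hY1 : 1 < Y) (hY2 : Y < 2) (hCp : 0 < Cp)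
    (hCm : 0 < Cm) (hq : ∀ x, 0 ≤ q x) (hqm : Measurable q) (hQ : ∀ x, q x ≤ Q) (hε : 0 < ε) :
    Integrable (fun x => mfun (x / ε)) (levyMeasure Y Cp Cm q) ∧
      ∫ x, mfun (x / ε) ∂(levyMeasure Y Cp Cm q) ≤ (Cp + Cm) * Q * Km Y * ε ^ (-Y) := by
  obtain ⟨h1, h2⟩ := mfun_scaled (ε := ε) hY1 hY2 hε
  have hb : ∀ x, levyDensity Y Cp Cm q x * mfun (x / ε)
      ≤ (Cp + Cm) * Q * (mfun (x / ε) * |x| ^ (-1 - Y)) := by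
    intro x
    have := mul_le_mul_of_nonneg_right (levyDensity_le (Y := Y) hCp hCm hq hQ x)
      (mfun_nonneg (x / ε))
    linarith
  have hi : Integrable (fun x => levyDensity Y Cp Cm q x * mfun (x / ε)) := by
    refine (h1.const_mul ((Cp + Cm) * Q)).mono' ?_ (Eventually.of_forall fun x => ?_)
    · exact ((measurable_levyDensity hqm).mul
        (continuous_mfun.measurable.comp (measurable_id.div_const ε))).aestronglyMeasurable
    · rw [Real.norm_of_nonneg (mul_nonneg (levyDensity_nonneg hCp hCm hq x) (mfun_nonneg _))]
      exact hb x
  refine ⟨(integrable_levy hCp hCm hq hqm _).2 hi, ?_⟩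
  rw [integral_levy hCp hCm hq hqm]
  calc _ ≤ ∫ x, (Cp + Cm) * Q * (mfun (x / ε) * |x| ^ (-1 - Y)) :=
        integral_mono hi (h1.const_mul _) hb
    _ = _ := by rw [integral_const_mul, h2]; ring

theorem one_le_mfun {y : ℝ} (hy : 1 / 16 < |y|) : 1 ≤ 256 * mfun y := by
  by_cases h : |y| ≤ 1
  · rw [mfun_of_le h, ← sq_abs]; nlinarith
  · rw [mfun_of_ge (not_le.1 h).le]; linarith

theorem abs_le_mfun {y : ℝ} (hy : 1 / 16 < |y|) : |y| ≤ 16 * mfun y := by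
  by_cases h : |y| ≤ 1
  · rw [mfun_of_le h, ← sq_abs]; nlinarith
  · rw [mfun_of_ge (not_le.1 h).le]; linarith [not_le.1 h]

/-- jumps larger than `ε/16` -/
def bigSet (ε : ℝ) : Set ℝ := {x | ε / 16 < |x|}

theorem measurableSet_bigSet (ε : ℝ) : MeasurableSet (bigSet ε) :=
  measurableSet_lt (by fun_prop) (by fun_prop)

theorem bigSet_scale {ε x : ℝ} (hε : 0 < ε) (hx : x ∈ bigSet ε) : 1 / 16 < |x / ε| := by
  have hx' : ε / 16 < |x| := hx
  rw [abs_div, abs_of_pos hε, lt_div_iff₀ hε]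
  linarith

section
variable {ν : Measure ℝ} {ε L : ℝ}

theorem big_mass (hε : 0 < ε) (hν1 : Integrable mfun ν) (hν : Integrable (fun x => mfun (x / ε)) ν)
    (hL : ∫ x, mfun (x / ε) ∂ν ≤ L) :
    (ν.restrict (bigSet ε)).real univ ≤ 256 * L := by
  have := finite_restrict hν1 (a := ε / 16) (by positivity)
  change IsFiniteMeasure (ν.restrict (bigSet ε)) at this
  calc (ν.restrict (bigSet ε)).real univ = ∫ x in bigSet ε, (1 : ℝ) ∂ν := by simp
    _ ≤ ∫ x in bigSet ε, 256 * mfun (x / ε) ∂ν := by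
        refine setIntegral_mono_on (integrable_const _) (hν.const_mul _).integrableOn
          (measurableSet_bigSet ε) fun x hx => one_le_mfun (bigSet_scale hε hx)
    _ ≤ ∫ x, 256 * mfun (x / ε) ∂ν :=
        setIntegral_le_integral (hν.const_mul _)
          (Eventually.of_forall fun x => mul_nonneg (by norm_num) (mfun_nonneg _))
    _ ≤ 256 * L := by rw [integral_const_mul]; gcongr

theorem big_trunc (hε : 0 < ε) (hν1 : Integrable mfun ν) (hν : Integrable (fun x => mfun (x / ε)) ν)
    (hL : ∫ x, mfun (x / ε) ∂ν ≤ L) :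
    |∫ x in bigSet ε, trunc x ∂ν| ≤ ε * (16 * L) := by
  have := finite_restrict hν1 (a := ε / 16) (by positivity)
  change IsFiniteMeasure (ν.restrict (bigSet ε)) at this
  have hb : ∀ x ∈ bigSet ε, |trunc x| ≤ ε * (16 * mfun (x / ε)) := by
    intro x hx
    refine (abs_trunc_le x).trans ?_
    have := abs_le_mfun (bigSet_scale hε hx)
    calc |x| = ε * |x / ε| := by rw [abs_div, abs_of_pos hε]; field_simp
      _ ≤ _ := by gcongr
  calc |∫ x in bigSet ε, trunc x ∂ν| ≤ ∫ x in bigSet ε, |trunc x| ∂ν := abs_integral_le_integral_abs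
    _ ≤ ∫ x in bigSet ε, ε * (16 * mfun (x / ε)) ∂ν := by
        refine setIntegral_mono_on (integrable_trunc _).abs
          ((hν.const_mul _).const_mul _).integrableOn (measurableSet_bigSet ε) hb
    _ ≤ ∫ x, ε * (16 * mfun (x / ε)) ∂ν :=
        setIntegral_le_integral ((hν.const_mul _).const_mul _)
          (Eventually.of_forall fun x => mul_nonneg hε.le (mul_nonneg (by norm_num) (mfun_nonneg _)))
    _ ≤ _ := by rw [integral_const_mul, integral_const_mul]; gcongr

theorem Psi_bound (β : ℝ) (hε : 0 < ε) (hε1 : ε ≤ 1) (hν : Integrable (fun x => mfun (x / ε)) ν)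
    (hL : ∫ x, mfun (x / ε) ∂ν ≤ L) (v : ℝ) :
    ‖Psi β ν (ε⁻¹ * v)‖ ≤ (|β| / ε + 3 * L) * (1 + v ^ 2) := by
  unfold Psi
  have h1 : ‖Complex.I * β * ((ε⁻¹ * v : ℝ) : ℂ)‖ ≤ |β| / ε * (1 + v ^ 2) := by
    rw [norm_mul, norm_mul, Complex.norm_I, one_mul, Complex.norm_real, Complex.norm_real,
      Real.norm_eq_abs, Real.norm_eq_abs, abs_mul, abs_of_pos (inv_pos.2 hε), ← mul_assoc,
      ← div_eq_mul_inv]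
    have : |v| ≤ 1 + v ^ 2 := by nlinarith [sq_nonneg (|v| - 1), sq_abs v]
    gcongr
  have h2 : ‖∫ x, lk (ε⁻¹ * v) x ∂ν‖ ≤ 3 * L * (1 + v ^ 2) := by
    calc _ ≤ ∫ x, 3 * (1 + v ^ 2) * mfun (x / ε) ∂ν := by
          refine norm_integral_le_of_norm_le (hν.const_mul _) (Eventually.of_forall fun x => ?_)
          have := norm_lk_le hε hε1 v x
          rwa [div_eq_inv_mul v ε] at this
      _ = 3 * (1 + v ^ 2) * ∫ x, mfun (x / ε) ∂ν := integral_const_mul _ _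
      _ ≤ 3 * (1 + v ^ 2) * L := by gcongr
      _ = _ := by ring
  calc _ ≤ _ := norm_add_le _ _
    _ ≤ _ := add_le_add h1 h2
    _ = _ := by ring

theorem Psi_bound_small (β : ℝ) (hε : 0 < ε) (hε1 : ε ≤ 1) (hν1 : Integrable mfun ν)
    (hν : Integrable (fun x => mfun (x / ε)) ν)
    (hL : ∫ x, mfun (x / ε) ∂ν ≤ L) (v : ℝ) :
    ‖Psi (β - ∫ x in bigSet ε, trunc x ∂ν) (ν.restrict (bigSet ε)ᶜ) (ε⁻¹ * v)‖
      ≤ (|β| / ε + 19 * L) * (1 + v ^ 2) := by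
  have hL' : ∫ x in (bigSet ε)ᶜ, mfun (x / ε) ∂ν ≤ L :=
    (setIntegral_le_integral hν (Eventually.of_forall fun x => mfun_nonneg _)).trans hL
  refine (Psi_bound (β - ∫ x in bigSet ε, trunc x ∂ν) hε hε1 hν.integrableOn hL' v).trans ?_
  have h1 : |β - ∫ x in bigSet ε, trunc x ∂ν| / ε ≤ |β| / ε + 16 * L := by
    rw [div_le_iff₀ hε, add_mul, div_mul_cancel₀ _ hε.ne']
    refine (abs_sub _ _).trans ?_
    have := big_trunc hε hν1 hν hL
    linarith
  gcongr ?_ * _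
  linarith

end

/-- inner cutoff -/
def bPhi : ContDiffBump (0 : ℝ) := ⟨1 / 16, 1 / 8, by norm_num, by norm_num⟩
/-- outer cutoff -/
def bTheta : ContDiffBump (0 : ℝ) := ⟨2, 3, by norm_num, by norm_num⟩
/-- smoothing cutoff -/
def bChi : ContDiffBump (0 : ℝ) := ⟨1 / 2, 1, by norm_num, by norm_num⟩

theorem bump_one (f : ContDiffBump (0 : ℝ)) {x : ℝ} (hx : |x| ≤ f.rIn) : f x = 1 :=
  f.one_of_mem_closedBall (by simpa using hx)

theorem bump_zero (f : ContDiffBump (0 : ℝ)) {x : ℝ} (hx : f.rOut ≤ |x|) : f x = 0 :=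
  f.zero_of_le_dist (by simpa using hx)

theorem exists_FRep_bump (f : ContDiffBump (0 : ℝ)) : ∃ G, FRep (f : ℝ → ℝ) G :=
  exists_FRep _ f.contDiff f.hasCompactSupport

theorem hasDerivAt_bump (f : ContDiffBump (0 : ℝ)) : HasDerivAt (f : ℝ → ℝ) 0 0 :=
  (hasDerivAt_const (0 : ℝ) (1 : ℝ)).congr_of_eventuallyEq f.eventuallyEq_one

theorem conv_tail (M N : Measure ℝ) [IsProbabilityMeasure M] [IsProbabilityMeasure N] (a : ℝ) :
    (M ∗ N).real {y | 2 * a ≤ |y|} ≤ M.real {y | a ≤ |y|} + N.real {y | a ≤ |y|} := by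
  have hA : ∀ c : ℝ, MeasurableSet {y : ℝ | c ≤ |y|} := fun c =>
    measurableSet_le (by fun_prop) (by fun_prop)
  rw [Measure.conv, map_measureReal_apply (by fun_prop) (hA _)]
  calc _ ≤ (M.prod N).real ({y | a ≤ |y|} ×ˢ univ ∪ univ ×ˢ {y | a ≤ |y|}) := by
        refine measureReal_mono ?_
        rintro ⟨x, y⟩ hxy
        simp only [mem_preimage, mem_ofPred_eq, mem_union, mem_prod, mem_univ, and_true,
          true_and] at hxy ⊢
        by_contra hc
        push Not at hc
        have := abs_add_le x y
        linarith [hc.1, hc.2]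
    _ ≤ _ := measureReal_union_le _ _
    _ = _ := by simp [measureReal_prod_prod]

theorem decomp {ν : Measure ℝ} [SFinite ν] {ε L b h : ℝ} {s : ℝ≥0} (hε : 0 < ε) (hε1 : ε ≤ 1)
    (hν1 : Integrable mfun ν) (hν : Integrable (fun x => mfun (x / ε)) ν)
    (hL : ∫ x, mfun (x / ε) ∂ν ≤ L) (hh : 0 ≤ h) {μ : Measure ℝ} [IsProbabilityMeasure μ]
    (hμ : ∀ u : ℝ, charFun μ u = Complex.exp (-(s * u ^ 2 / 2 : ℝ) + h * Psi b ν u))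
    {G : ℝ → ℂ} (hG : FRep (bPhi : ℝ → ℝ) G) :
    ∃ M : Measure ℝ, IsProbabilityMeasure M ∧
      (∀ u : ℝ, charFun M u = Complex.exp (-(s * u ^ 2 / 2 : ℝ)
        + h * Psi (b - ∫ x in bigSet ε, trunc x ∂ν) (ν.restrict (bigSet ε)ᶜ) u)) ∧
      μ = M ∗ compPois (ENNReal.ofReal h • ν.restrict (bigSet ε)) ∧
      M.real {y | ε / 4 ≤ |y|} ≤ (∫ v : ℝ, (1 + v ^ 2) ^ 2 * ‖G v‖)
          * (h * (|b| / ε + 19 * L)) ^ 2 + (gaussianReal 0 s).real {y | ε / 8 ≤ |y|} := by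
  have hfin := finite_restrict hν1 (a := ε / 16) (by positivity)
  change IsFiniteMeasure (ν.restrict (bigSet ε)) at hfin
  have hfin2 : IsFiniteMeasure (ENNReal.ofReal h • ν.restrict (bigSet ε)) :=
    Measure.smul_finite _ ENNReal.ofReal_ne_top
  set β := b - ∫ x in bigSet ε, trunc x ∂ν with hβ
  set ν₀ := ν.restrict (bigSet ε)ᶜ with hν₀
  have hν01 : Integrable mfun ν₀ := hν1.integrableOn
  obtain ⟨T, hT, hTc⟩ := exists_levy_smul β hν01 hh
  have hMc : ∀ u : ℝ, charFun (gaussianReal 0 s ∗ T) u = Complex.exp (-(s * u ^ 2 / 2 : ℝ)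
        + h * Psi β ν₀ u) := by
    intro u
    rw [charFun_conv, charFun_gaussianReal, hTc, ← Complex.exp_add]
    congr 1
    push_cast
    ring
  refine ⟨gaussianReal 0 s ∗ T, inferInstance, hMc, ?_, ?_⟩
  · apply Measure.ext_of_charFun
    ext u
    rw [charFun_conv, hMc, charFun_compPois, hμ, ← Complex.exp_add,
      Psi_split b hν1 (measurableSet_bigSet ε) u, measureReal_ennreal_smul_apply,
      ENNReal.toReal_ofReal hh]
    congr 1
    have : charFun (ENNReal.ofReal h • ν.restrict (bigSet ε)) u
        = h * charFun (ν.restrict (bigSet ε)) u := by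
      rw [charFun_eq_integral_I, integral_smul_measure, ENNReal.toReal_ofReal hh,
        ← charFun_eq_integral_I, Complex.real_smul]
    rw [this]
    push_cast
    ring
  · have h1 := conv_tail (gaussianReal 0 s) T (ε / 8)
    rw [show 2 * (ε / 8) = ε / 4 by ring] at h1
    have hso := hG.second_order (hasDerivAt_bump _) (M := T) (ρ := ν₀) (β := β) (h := h) (s := 0)
      hν01 hε hε1 hν.integrableOn hh (Psi_bound_small b hε hε1 hν1 hν hL) (by
        intro u; rw [hTc]; simp)
    have hz : ∫ x, (bPhi (ε⁻¹ * x) - bPhi 0) ∂ν₀ = 0 := by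
      rw [hν₀]
      refine setIntegral_eq_zero_of_forall_eq_zero fun x hx => ?_
      have hx' : |x| ≤ ε / 16 := not_lt.1 hx
      rw [bump_one bPhi (x := ε⁻¹ * x), bump_one bPhi (x := 0), sub_self]
      · simp [bPhi]
      · change _ ≤ 1 / 16
        rw [abs_mul, abs_of_pos (inv_pos.2 hε), ← div_eq_inv_mul, div_le_iff₀ hε]
        linarith
    have hg : ∫ y, bPhi (ε⁻¹ * y) ∂(gaussianReal 0 0) = 1 := by
      simp only [gaussianReal_zero_var, integral_dirac, mul_zero]
      rw [bump_one bPhi (x := 0)]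
      simp [bPhi]
    rw [hz, hg, mul_zero, sub_zero] at hso
    have hT2 : T.real {y | ε / 8 ≤ |y|} ≤ 1 - ∫ y, bPhi (ε⁻¹ * y) ∂T := by
      have hA : MeasurableSet {y : ℝ | ε / 8 ≤ |y|} := measurableSet_le (by fun_prop) (by fun_prop)
      have hint : Integrable (fun y => bPhi (ε⁻¹ * y)) T := by
        refine (integrable_const (1 : ℝ)).mono' ?_ (Eventually.of_forall fun x => ?_)
        · exact (bPhi.continuous.comp (by fun_prop)).aestronglyMeasurable
        · rw [Real.norm_of_nonneg bPhi.nonneg]; exact bPhi.le_one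
      calc T.real {y | ε / 8 ≤ |y|} = ∫ y, {y | ε / 8 ≤ |y|}.indicator 1 y ∂T :=
            (integral_indicator_one hA).symm
        _ ≤ ∫ y, (1 - bPhi (ε⁻¹ * y)) ∂T := by
            refine integral_mono ((integrable_const (1 : ℝ)).indicator hA)
              (integrable_fsub (integrable_const _) hint) fun y => ?_
            by_cases hy : y ∈ {y : ℝ | ε / 8 ≤ |y|}
            · have hy' : ε / 8 ≤ |y| := hy
              simp only [indicator_of_mem hy, Pi.one_apply]
              rw [bump_zero bPhi, sub_zero]
              change 1 / 8 ≤ _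
              rw [abs_mul, abs_of_pos (inv_pos.2 hε), ← div_eq_inv_mul, le_div_iff₀ hε]
              linarith
            · simp only [indicator_of_notMem hy]
              linarith [bPhi.le_one (x := ε⁻¹ * y)]
        _ = _ := by rw [integral_sub (integrable_const _) hint]; simp
    have h3 : 1 - ∫ y, bPhi (ε⁻¹ * y) ∂T ≤ (∫ v : ℝ, (1 + v ^ 2) ^ 2 * ‖G v‖)
          * (h * (|b| / ε + 19 * L)) ^ 2 := by
      have := (abs_le.1 hso).1
      simp only [NNReal.coe_zero, zero_div, add_zero] at this
      nlinarith
    linarith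

theorem aux_e1 {l : ℝ} (hl : 0 ≤ l) : Real.exp (-l) * (Real.exp l - 1 - l) ≤ l ^ 2 := by
  have h1 : Real.exp (-l) * Real.exp l = 1 := by rw [← Real.exp_add]; simp
  have h2 := Real.add_one_le_exp (-l)
  nlinarith

theorem bdd_integrable {M : Measure ℝ} [IsFiniteMeasure M] {f : ℝ → ℝ} (hf : Measurable f) {A : ℝ}
    (h0 : ∀ x, 0 ≤ f x) (hA : ∀ x, f x ≤ A) : Integrable f M :=
  (integrable_const A).mono' hf.aestronglyMeasurable
    (Eventually.of_forall fun x => by rw [Real.norm_of_nonneg (h0 x)]; exact hA x)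

theorem shift_integral {ρ : Measure ℝ} [IsFiniteMeasure ρ] {f : ℝ → ℝ} (hf : Measurable f) {A : ℝ}
    (h0 : ∀ x, 0 ≤ f x) (hA : ∀ x, f x ≤ A) :
    Measurable (fun y => ∫ x, f (y + x) ∂ρ) ∧ (∀ y, 0 ≤ ∫ x, f (y + x) ∂ρ) ∧
      ∀ y, ∫ x, f (y + x) ∂ρ ≤ A * ρ.real univ := by
  refine ⟨?_, fun y => integral_nonneg fun x => h0 _, fun y => ?_⟩
  · have : StronglyMeasurable (fun p : ℝ × ℝ => f (p.1 + p.2)) :=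
      (hf.comp (by fun_prop)).stronglyMeasurable
    exact this.integral_prod_right'.measurable
  · calc _ ≤ ∫ x, A ∂ρ := integral_mono (bdd_integrable (hf.comp (by fun_prop)) (fun x => h0 _)
            (fun x => hA _)) (integrable_const _) fun x => hA _
      _ = _ := by simp [mul_comm]

theorem ind_tail (M : Measure ℝ) [IsProbabilityMeasure M] {S : Set ℝ} (hS : MeasurableSet S)
    (c d : ℝ) : Integrable (fun y => c * (S.indicator (1 : ℝ → ℝ) y) + d) M ∧
      ∫ y, (c * (S.indicator (1 : ℝ → ℝ) y) + d) ∂M = c * M.real S + d := by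
  have h1 : Integrable (fun y => c * (S.indicator (1 : ℝ → ℝ) y)) M :=
    ((integrable_const (1 : ℝ)).indicator hS).const_mul c
  refine ⟨integrable_fadd h1 (integrable_const _), ?_⟩
  rw [integral_add h1 (integrable_const _), integral_const_mul, integral_indicator_one hS]
  simp

theorem rough_one {M ρ : Measure ℝ} [IsProbabilityMeasure M] [IsFiniteMeasure ρ] {f : ℝ → ℝ}
    (hf : Measurable f) {A ε : ℝ} (hε : 0 < ε) (h0 : ∀ x, 0 ≤ f x) (hA : ∀ x, f x ≤ A)
    (hs : ∀ x, f x ≠ 0 → ε / 2 ≤ |x|) :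
    |(∫ z, f z ∂(M ∗ compPois ρ)) - ∫ y, ∫ x, f (y + x) ∂ρ ∂M|
      ≤ A * (M.real {y | ε / 4 ≤ |y|} + 2 * (ρ.real univ) ^ 2) := by
  set l := ρ.real univ with hl
  have hl0 : 0 ≤ l := measureReal_nonneg
  have hA0 : 0 ≤ A := (h0 0).trans (hA 0)
  have hS : MeasurableSet {y : ℝ | ε / 4 ≤ |y|} := measurableSet_le (by fun_prop) (by fun_prop)
  obtain ⟨m1, p1, u1⟩ := shift_integral (ρ := ρ) hf h0 hA
  obtain ⟨m2, p2, u2⟩ := shift_integral (ρ := jumpRest ρ) hf h0 hA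
  have hshift : ∀ (y : ℝ) (N : Measure ℝ) [IsFiniteMeasure N], Integrable (fun x => f (y + x)) N :=
    fun y N _ => bdd_integrable (hf.comp (by fun_prop)) (fun x => h0 _) (fun x => hA _)
  have e1 : ∫ z, f z ∂(M ∗ compPois ρ)
      = ∫ y, Real.exp (-l) * (f y + (∫ x, f (y + x) ∂ρ) + ∫ x, f (y + x) ∂(jumpRest ρ)) ∂M := by
    rw [integral_conv (bdd_integrable hf h0 hA)]
    congr 1
    ext y
    rw [compPois, integral_smul_measure,
      integral_add_measure (hshift _ _) (hshift _ _),
      integral_add_measure (hshift _ _) (hshift _ _), ENNReal.toReal_ofReal (by positivity),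
      integral_dirac, add_zero, smul_eq_mul]
  have i0 : Integrable f M := bdd_integrable hf h0 hA
  have i1 : Integrable (fun y => ∫ x, f (y + x) ∂ρ) M := bdd_integrable m1 p1 u1
  have i2 : Integrable (fun y => ∫ x, f (y + x) ∂(jumpRest ρ)) M := bdd_integrable m2 p2 u2
  have i3 : Integrable (fun y => Real.exp (-l) * (f y + (∫ x, f (y + x) ∂ρ)
      + ∫ x, f (y + x) ∂(jumpRest ρ))) M := (integrable_fadd (integrable_fadd i0 i1) i2).const_mul _
  rw [e1, ← integral_sub i3 i1, ← Real.norm_eq_abs]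
  obtain ⟨ib, ie⟩ := ind_tail M hS A (2 * A * l ^ 2)
  refine (norm_integral_le_of_norm_le ib (Eventually.of_forall fun y => ?_)).trans ?_
  · have hf1 : f y ≤ A * ({y : ℝ | ε / 4 ≤ |y|}.indicator (1 : ℝ → ℝ) y) := by
      by_cases hy : f y = 0
      · rw [hy]
        refine mul_nonneg hA0 (indicator_nonneg (fun _ _ => zero_le_one) _)
      · have : y ∈ {y : ℝ | ε / 4 ≤ |y|} := by
          have := hs y hy
          simp only [mem_ofPred_eq]; linarith
        rw [indicator_of_mem this]
        simpa using hA y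
    have he1 : Real.exp (-l) ≤ 1 := Real.exp_le_one_iff.2 (by linarith)
    have he0 := Real.exp_pos (-l)
    have he2 := Real.add_one_le_exp (-l)
    have t1 : Real.exp (-l) * f y ≤ A * ({y : ℝ | ε / 4 ≤ |y|}.indicator (1 : ℝ → ℝ) y) := by
      have := h0 y; nlinarith
    have t2 : (1 - Real.exp (-l)) * (∫ x, f (y + x) ∂ρ) ≤ A * l ^ 2 := by
      calc _ ≤ l * (A * l) := by
            apply mul_le_mul (by linarith) (u1 y) (p1 y) hl0
        _ = _ := by ring
    have t3 : Real.exp (-l) * (∫ x, f (y + x) ∂(jumpRest ρ)) ≤ A * l ^ 2 := by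
      have := u2 y
      rw [real_jumpRest] at this
      calc _ ≤ Real.exp (-l) * (A * (Real.exp l - 1 - l)) := by gcongr
        _ = A * (Real.exp (-l) * (Real.exp l - 1 - l)) := by ring
        _ ≤ A * l ^ 2 := by gcongr; exact aux_e1 hl0
    have s1 : 0 ≤ Real.exp (-l) * f y := mul_nonneg he0.le (h0 y)
    have s2 : 0 ≤ (1 - Real.exp (-l)) * (∫ x, f (y + x) ∂ρ) := mul_nonneg (by linarith) (p1 y)
    have s3 : 0 ≤ Real.exp (-l) * (∫ x, f (y + x) ∂(jumpRest ρ)) := mul_nonneg he0.le (p2 y)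
    rw [Real.norm_eq_abs, abs_le]
    have hz : 0 ≤ A * l ^ 2 := by positivity
    have hz2 := h0 y
    constructor <;> nlinarith
  · rw [ie]
    exact le_of_eq (by ring)

/-- the stable Lévy density -/
def sd (Y Cp Cm : ℝ) (x : ℝ) : ℝ := levyDensity Y Cp Cm (fun _ => 1) x

/-- smooth cut stable density -/
def Ac (Y Cp Cm : ℝ) (x : ℝ) : ℝ := sd Y Cp Cm x * (1 - bPhi x) * bTheta x

theorem sd_nonneg {Y Cp Cm : ℝ} (hCp : 0 < Cp) (hCm : 0 < Cm) (x : ℝ) : 0 ≤ sd Y Cp Cm x :=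
  levyDensity_nonneg hCp hCm (fun _ => zero_le_one) x

theorem measurable_sd {Y Cp Cm : ℝ} : Measurable (sd Y Cp Cm) :=
  measurable_levyDensity measurable_const

theorem sd_scale {Y Cp Cm ε : ℝ} (hε : 0 < ε) (x : ℝ) :
    sd Y Cp Cm x = ε ^ (-1 - Y) * sd Y Cp Cm (ε⁻¹ * x) := by
  unfold sd levyDensity
  rw [scale_rpow hε x]
  have h1 : (0 < ε⁻¹ * x) ↔ 0 < x := by
    constructor
    · intro h; exact pos_of_mul_pos_right h (inv_pos.2 hε).le
    · intro h; positivity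
  have h2 : (ε⁻¹ * x < 0) ↔ x < 0 := by
    constructor
    · intro h; by_contra hc; push Not at hc; have : 0 ≤ ε⁻¹ * x := by positivity
      linarith
    · intro h; exact mul_neg_of_pos_of_neg (inv_pos.2 hε) h
  simp only [h1, h2]
  ring

theorem contDiff_Ac (Y Cp Cm : ℝ) : ContDiff ℝ ((⊤ : ℕ∞) : WithTop ℕ∞) (Ac Y Cp Cm) := by
  rw [contDiff_iff_contDiffAt]
  intro x
  have hrest : ContDiffAt ℝ ((⊤ : ℕ∞) : WithTop ℕ∞) (fun x => (1 - bPhi x) * bTheta x) x :=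
    (contDiffAt_const.sub bPhi.contDiffAt).mul bTheta.contDiffAt
  rcases lt_trichotomy x 0 with hx | hx | hx
  · have h1 : ContDiffAt ℝ ((⊤ : ℕ∞) : WithTop ℕ∞) (fun x : ℝ => Cm * (-x) ^ (-1 - Y)) x :=
      contDiffAt_const.mul (contDiffAt_id.neg.rpow_const_of_ne (by simp; exact hx.ne))
    refine (h1.mul hrest).congr_of_eventuallyEq ?_
    filter_upwards [Iio_mem_nhds hx] with y hy
    have hy' : y < 0 := hy
    simp only [Ac, sd, levyDensity, if_neg (not_lt.2 hy'.le), if_pos hy', abs_of_neg hy']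
    ring
  · have h1 : ContDiffAt ℝ ((⊤ : ℕ∞) : WithTop ℕ∞) (fun x : ℝ => (0 : ℝ)) x := contDiffAt_const
    refine h1.congr_of_eventuallyEq ?_
    subst hx
    filter_upwards [bPhi.eventuallyEq_one] with y hy
    simp [Ac, hy]
  · have h1 : ContDiffAt ℝ ((⊤ : ℕ∞) : WithTop ℕ∞) (fun x : ℝ => Cp * x ^ (-1 - Y)) x :=
      contDiffAt_const.mul (contDiffAt_id.rpow_const_of_ne hx.ne')
    refine (h1.mul hrest).congr_of_eventuallyEq ?_
    filter_upwards [Ioi_mem_nhds hx] with y hy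
    have hy' : 0 < y := hy
    simp only [Ac, sd, levyDensity, if_pos hy', abs_of_pos hy']
    ring

theorem compact_Ac (Y Cp Cm : ℝ) : HasCompactSupport (Ac Y Cp Cm) :=
  bTheta.hasCompactSupport.mul_left (f := fun x => sd Y Cp Cm x * (1 - bPhi x))

theorem Ac_nonneg {Y Cp Cm : ℝ} (hCp : 0 < Cp) (hCm : 0 < Cm) (x : ℝ) : 0 ≤ Ac Y Cp Cm x :=
  mul_nonneg (mul_nonneg (sd_nonneg hCp hCm x) (by linarith [bPhi.le_one (x := x)])) bTheta.nonneg

theorem Ac_le {Y Cp Cm : ℝ} (hCp : 0 < Cp) (hCm : 0 < Cm) (x : ℝ) :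
    Ac Y Cp Cm x ≤ sd Y Cp Cm x := by
  have h1 := sd_nonneg (Y := Y) hCp hCm x
  have h2 : 0 ≤ 1 - bPhi x := by linarith [bPhi.le_one (x := x)]
  have h3 := bPhi.nonneg (x := x)
  have h4 := bTheta.nonneg (x := x)
  have h5 := bTheta.le_one (x := x)
  unfold Ac
  calc _ ≤ sd Y Cp Cm x * 1 * 1 := by gcongr; linarith
    _ = _ := by ring

theorem Ac_zero {Y Cp Cm x : ℝ} (hx : |x| ≤ 1 / 16 ∨ 3 ≤ |x|) : Ac Y Cp Cm x = 0 := by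
  unfold Ac
  rcases hx with hx | hx
  · rw [bump_one bPhi hx]; ring
  · rw [bump_zero bTheta hx]; ring

theorem Ac_eq {Y Cp Cm x : ℝ} (hx : 1 / 8 ≤ |x|) (hx2 : |x| ≤ 2) :
    Ac Y Cp Cm x = sd Y Cp Cm x := by
  unfold Ac
  rw [bump_zero bPhi hx, bump_one bTheta hx2]; ring

/-- scaled cut stable density -/
def ac (Y Cp Cm ε : ℝ) (x : ℝ) : ℝ := ε ^ (-1 - Y) * Ac Y Cp Cm (ε⁻¹ * x)

theorem abs_inv_mul {ε : ℝ} (hε : 0 < ε) (x : ℝ) : |ε⁻¹ * x| = |x| / ε := by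
  rw [abs_mul, abs_of_pos (inv_pos.2 hε), ← div_eq_inv_mul]

section
variable {Y Cp Cm ε : ℝ}

theorem ac_nonneg (hCp : 0 < Cp) (hCm : 0 < Cm) (hε : 0 < ε) (x : ℝ) : 0 ≤ ac Y Cp Cm ε x :=
  mul_nonneg (by positivity) (Ac_nonneg hCp hCm _)

theorem ac_le (hCp : 0 < Cp) (hCm : 0 < Cm) (hε : 0 < ε) (x : ℝ) :
    ac Y Cp Cm ε x ≤ sd Y Cp Cm x := by
  rw [sd_scale hε x, ac]
  have := Ac_le (Y := Y) hCp hCm (ε⁻¹ * x)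
  gcongr

theorem ac_eq (hε : 0 < ε) {x : ℝ} (h1 : ε / 8 ≤ |x|) (h2 : |x| ≤ 2 * ε) :
    ac Y Cp Cm ε x = sd Y Cp Cm x := by
  rw [sd_scale hε x, ac, Ac_eq]
  · rw [abs_inv_mul hε, le_div_iff₀ hε]; linarith
  · rw [abs_inv_mul hε, div_le_iff₀ hε]; linarith

theorem ac_zero (hε : 0 < ε) {x : ℝ} (h : |x| ≤ ε / 16 ∨ 3 * ε ≤ |x|) :
    ac Y Cp Cm ε x = 0 := by
  rw [ac, Ac_zero, mul_zero]
  rw [abs_inv_mul hε, div_le_iff₀ hε, le_div_iff₀ hε]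
  rcases h with h | h
  · left; linarith
  · right; linarith

theorem continuous_ac : Continuous (ac Y Cp Cm ε) := by
  unfold ac
  have := (contDiff_Ac Y Cp Cm).continuous
  fun_prop

theorem compact_ac (hε : 0 < ε) : HasCompactSupport (ac Y Cp Cm ε) := by
  refine HasCompactSupport.of_support_subset_isCompact (isCompact_Icc (a := -(3 * ε)) (b := 3 * ε)) ?_
  intro x hx
  by_contra hc
  apply hx
  apply ac_zero hε
  right
  by_contra h3
  apply hc
  have := abs_le.1 (not_le.1 h3).le
  exact ⟨this.1, this.2⟩

theorem integrable_ac (hε : 0 < ε) : Integrable (ac Y Cp Cm ε) :=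
  continuous_ac.integrable_of_hasCompactSupport (compact_ac hε)

end

theorem ac_mass {Y Cp Cm ε : ℝ} (hY1 : 1 < Y) (hY2 : Y < 2) (hCp : 0 < Cp) (hCm : 0 < Cm)
    (hε : 0 < ε) : ∫ x, ac Y Cp Cm ε x ≤ 256 * ((Cp + Cm) * Km Y * ε ^ (-Y)) := by
  have h01 : ∀ x : ℝ, (0 : ℝ) ≤ (fun _ : ℝ => (1 : ℝ)) x := fun _ => zero_le_one
  obtain ⟨h1, h2⟩ := levy_mfun (Q := 1) (q := fun _ => 1) hY1 hY2 hCp hCm h01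
    measurable_const (fun _ => le_rfl) hε
  rw [integrable_levy hCp hCm h01 measurable_const] at h1
  rw [integral_levy hCp hCm h01 measurable_const] at h2
  calc ∫ x, ac Y Cp Cm ε x ≤ ∫ x, 256 * (levyDensity Y Cp Cm (fun _ => 1) x * mfun (x / ε)) := by
        refine integral_mono (integrable_ac hε) (h1.const_mul _) fun x => ?_
        have hn := sd_nonneg (Y := Y) hCp hCm x
        by_cases hx : |x| ≤ ε / 16
        · simp only
          rw [ac_zero hε (Or.inl hx)]
          exact mul_nonneg (by norm_num) (mul_nonneg hn (mfun_nonneg _))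
        · have h3 := one_le_mfun (bigSet_scale hε (not_le.1 hx : x ∈ bigSet ε))
          have h4 := ac_le (Y := Y) hCp hCm hε x
          simp only
          change _ ≤ 256 * (sd Y Cp Cm x * _)
          nlinarith
    _ = 256 * ∫ x, levyDensity Y Cp Cm (fun _ => 1) x * mfun (x / ε) := integral_const_mul _ _
    _ ≤ _ := by
        gcongr
        calc _ ≤ _ := h2
          _ = _ := by ring

section
variable {Y Cp Cm ε Q A : ℝ} {q f : ℝ → ℝ}

theorem integrable_q_ac (hε : 0 < ε) (hq : ∀ x, 0 ≤ q x) (hqm : Measurable q) (hQ : ∀ x, q x ≤ Q) :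
    Integrable (fun x => |q x - 1| * ac Y Cp Cm ε x) := by
  refine (integrable_ac (Y := Y) (Cp := Cp) (Cm := Cm) hε).bdd_mul (c := Q + 1) ?_
    (Eventually.of_forall fun x => ?_)
  · exact ((hqm.sub_const 1).abs).aestronglyMeasurable
  · rw [Real.norm_eq_abs, abs_abs, abs_le]
    have := hq x
    have := hQ x
    constructor <;> linarith

theorem jump_pointwise (hCp : 0 < Cp) (hCm : 0 < Cm) (hq : ∀ x, 0 ≤ q x)
    (hqm : Measurable q) (hQ : ∀ x, q x ≤ Q) (hε : 0 < ε)
    (hν1 : Integrable mfun (levyMeasure Y Cp Cm q))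
    (hf : Measurable f) (h0 : ∀ x, 0 ≤ f x) (hA : ∀ x, f x ≤ A)
    (hs : ∀ x, f x ≠ 0 → ε / 2 ≤ |x| ∧ |x| ≤ ε) (y : ℝ) :
    |(∫ x, f (y + x) ∂((levyMeasure Y Cp Cm q).restrict (bigSet ε)))
        - ∫ x, ac Y Cp Cm ε x * f (y + x)|
      ≤ A * (((levyMeasure Y Cp Cm q).restrict (bigSet ε)).real univ + ∫ x, ac Y Cp Cm ε x)
          * ({y : ℝ | ε / 4 ≤ |y|}.indicator (1 : ℝ → ℝ) y)
        + A * ∫ x, |q x - 1| * ac Y Cp Cm ε x := by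
  have hfin := finite_restrict hν1 (a := ε / 16) (by positivity)
  change IsFiniteMeasure ((levyMeasure Y Cp Cm q).restrict (bigSet ε)) at hfin
  have hA0 : 0 ≤ A := (h0 0).trans (hA 0)
  have hqi : 0 ≤ ∫ x, |q x - 1| * ac Y Cp Cm ε x :=
    integral_nonneg fun x => mul_nonneg (abs_nonneg _) (ac_nonneg hCp hCm hε x)
  have hfm : Measurable fun x => f (y + x) := hf.comp (by fun_prop)
  have hif : Integrable (fun x => f (y + x)) ((levyMeasure Y Cp Cm q).restrict (bigSet ε)) :=
    bdd_integrable hfm (fun x => h0 _) (fun x => hA _)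
  have hia : Integrable (fun x => ac Y Cp Cm ε x * f (y + x)) := by
    refine (integrable_ac (Y := Y) (Cp := Cp) (Cm := Cm) hε).mul_bdd (c := A)
      hfm.aestronglyMeasurable (Eventually.of_forall fun x => ?_)
    rw [Real.norm_of_nonneg (h0 _)]; exact hA _
  have p1 : 0 ≤ ∫ x, f (y + x) ∂((levyMeasure Y Cp Cm q).restrict (bigSet ε)) :=
    integral_nonneg fun x => h0 _
  have p2 : 0 ≤ ∫ x, ac Y Cp Cm ε x * f (y + x) :=
    integral_nonneg fun x => mul_nonneg (ac_nonneg hCp hCm hε x) (h0 _)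
  by_cases hy : ε / 4 ≤ |y|
  · have hy' : y ∈ {y : ℝ | ε / 4 ≤ |y|} := hy
    rw [indicator_of_mem hy', Pi.one_apply, mul_one]
    have u1 := (shift_integral (ρ := (levyMeasure Y Cp Cm q).restrict (bigSet ε)) hf h0 hA).2.2 y
    have u2 : ∫ x, ac Y Cp Cm ε x * f (y + x) ≤ A * ∫ x, ac Y Cp Cm ε x := by
      rw [← integral_const_mul]
      refine integral_mono hia ((integrable_ac hε).const_mul _) fun x => ?_
      have := ac_nonneg (Y := Y) hCp hCm hε x
      have := hA (y + x)
      simp only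
      nlinarith
    have hz : 0 ≤ A * ∫ x, |q x - 1| * ac Y Cp Cm ε x := mul_nonneg hA0 hqi
    rw [abs_le]
    constructor <;> nlinarith
  · have hy' : y ∉ {y : ℝ | ε / 4 ≤ |y|} := hy
    rw [indicator_of_notMem hy', mul_zero, zero_add]
    have e1 : ∫ x, f (y + x) ∂((levyMeasure Y Cp Cm q).restrict (bigSet ε))
        = ∫ x, levyDensity Y Cp Cm q x * (bigSet ε).indicator (fun x => f (y + x)) x := by
      rw [← integral_indicator (measurableSet_bigSet ε), integral_levy hCp hCm hq hqm]
    have i1 : Integrable (fun x => levyDensity Y Cp Cm q x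
        * (bigSet ε).indicator (fun x => f (y + x)) x) := by
      rw [← integrable_levy hCp hCm hq hqm, integrable_indicator_iff (measurableSet_bigSet ε)]
      exact hif
    rw [e1, ← integral_sub i1 hia, ← integral_const_mul, ← Real.norm_eq_abs]
    refine norm_integral_le_of_norm_le ((integrable_q_ac hε hq hqm hQ).const_mul A)
      (Eventually.of_forall fun x => ?_)
    by_cases hfx : f (y + x) = 0
    · have : (bigSet ε).indicator (fun x => f (y + x)) x = 0 := by
        rw [indicator_apply_eq_zero]; intro _; exact hfx
      rw [this, hfx]
      simp only [mul_zero, sub_zero, norm_zero]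
      exact mul_nonneg hA0 (mul_nonneg (abs_nonneg _) (ac_nonneg hCp hCm hε x))
    · obtain ⟨a1, a2⟩ := hs _ hfx
      have hy2 := not_le.1 hy
      have b1 : ε / 4 ≤ |x| := by
        have := abs_add_le y x
        linarith
      have b2 : |x| ≤ 2 * ε := by
        have := abs_sub (y + x) y
        rw [add_sub_cancel_left] at this
        linarith
      have hxb : x ∈ bigSet ε := by
        change ε / 16 < |x|; linarith
      rw [indicator_of_mem hxb, ac_eq hε (by linarith) b2, levyDensity_mul]
      change ‖q x * sd Y Cp Cm x * _ - _‖ ≤ _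
      rw [show q x * sd Y Cp Cm x * f (y + x) - sd Y Cp Cm x * f (y + x)
        = (q x - 1) * sd Y Cp Cm x * f (y + x) by ring, norm_mul, norm_mul, Real.norm_eq_abs,
        Real.norm_of_nonneg (sd_nonneg hCp hCm x), Real.norm_of_nonneg (h0 _), mul_comm]
      have := mul_nonneg (abs_nonneg (q x - 1)) (sd_nonneg (Y := Y) hCp hCm x)
      have := hA (y + x)
      gcongr

theorem integrable_f_vol (hf : Measurable f) (h0 : ∀ x, 0 ≤ f x) (hA : ∀ x, f x ≤ A)
    (hε : 0 < ε) (hs : ∀ x, f x ≠ 0 → |x| ≤ ε) :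
    Integrable f ∧ ∫ x, f x ≤ 2 * ε * A := by
  have hA0 : 0 ≤ A := (h0 0).trans (hA 0)
  have hi : Integrable ((Icc (-ε) ε).indicator fun _ : ℝ => A) := by
    rw [integrable_indicator_iff measurableSet_Icc]
    exact integrableOn_const (by simp)
  have hb : ∀ x, f x ≤ (Icc (-ε) ε).indicator (fun _ : ℝ => A) x := by
    intro x
    by_cases hx : f x = 0
    · rw [hx]; exact indicator_nonneg (fun _ _ => hA0) _
    · have := abs_le.1 (hs x hx)
      rw [indicator_of_mem (show x ∈ Icc (-ε) ε from ⟨this.1, this.2⟩)]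
      exact hA x
  have hfi : Integrable f := hi.mono' hf.aestronglyMeasurable
    (Eventually.of_forall fun x => by rw [Real.norm_of_nonneg (h0 x)]; exact hb x)
  refine ⟨hfi, (integral_mono hfi hi hb).trans ?_⟩
  rw [integral_indicator measurableSet_Icc, setIntegral_const, Real.volume_real_Icc_of_le (by linarith),
    smul_eq_mul]
  exact le_of_eq (by ring)

theorem jump_smooth {M : Measure ℝ} [IsProbabilityMeasure M] {ρ : Measure ℝ} {β s h B : ℝ}
    {G : ℝ → ℂ} (hG : FRep (Ac Y Cp Cm) G) (hρ1 : Integrable mfun ρ) (hε : 0 < ε)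
    (hs0 : 0 ≤ s) (hh : 0 ≤ h)
    (hB : ∀ v : ℝ, ‖Psi β ρ (ε⁻¹ * v)‖ ≤ B * (1 + v ^ 2))
    (hM : ∀ u : ℝ, charFun M u = Complex.exp (-(s * u ^ 2 / 2 : ℝ) + h * Psi β ρ u))
    (hf : Measurable f) (h0 : ∀ x, 0 ≤ f x) (hA : ∀ x, f x ≤ A)
    (hs : ∀ x, f x ≠ 0 → ε / 2 ≤ |x| ∧ |x| ≤ ε) :
    |(∫ y, ∫ x, ac Y Cp Cm ε x * f (y + x) ∂volume ∂M) - ∫ x, sd Y Cp Cm x * f x|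
      ≤ 2 * A * ε ^ (-Y) * ((∫ v : ℝ, (1 + v ^ 2) ^ 2 * ‖G v‖) * (h * B + s / ε ^ 2)) := by
  obtain ⟨fi, fb⟩ := integrable_f_vol hf h0 hA hε (fun x hx => (hs x hx).2)
  set K := (∫ v : ℝ, (1 + v ^ 2) ^ 2 * ‖G v‖) * (h * B + s / ε ^ 2) with hK
  obtain ⟨C, hC⟩ := (compact_ac (Y := Y) (Cp := Cp) (Cm := Cm) hε).exists_bound_of_continuous
    continuous_ac
  have e1 : ∀ y, ∫ x, ac Y Cp Cm ε x * f (y + x) = ∫ z, ac Y Cp Cm ε (z - y) * f z := by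
    intro y
    rw [← integral_add_left_eq_self (fun z => ac Y Cp Cm ε (z - y) * f z) y]
    congr 1
    ext x
    rw [add_sub_cancel_left]
  simp_rw [e1]
  have hint : Integrable (fun p : ℝ × ℝ => ac Y Cp Cm ε (p.2 - p.1) * f p.2) (M.prod volume) := by
    refine (fi.comp_snd M).bdd_mul (c := C) ?_ (Eventually.of_forall fun p => hC _)
    exact (continuous_ac.comp (by fun_prop)).aestronglyMeasurable
  rw [integral_integral_swap hint]
  have e2 : ∀ z, ∫ y, ac Y Cp Cm ε (z - y) * f z ∂M = (∫ y, ac Y Cp Cm ε (z - y) ∂M) * f z :=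
    fun z => integral_mul_const _ _
  simp_rw [e2]
  have e3 : ∀ z, sd Y Cp Cm z * f z = ac Y Cp Cm ε z * f z := by
    intro z
    by_cases hz : f z = 0
    · rw [hz, mul_zero, mul_zero]
    · obtain ⟨a1, a2⟩ := hs z hz
      rw [ac_eq hε (by linarith) (by linarith)]
  simp_rw [e3]
  have i1 : Integrable (fun z => (∫ y, ac Y Cp Cm ε (z - y) ∂M) * f z) := by
    have := hint.integral_prod_right
    simpa only [e2] using this
  have i2 : Integrable (fun z => ac Y Cp Cm ε z * f z) :=
    fi.bdd_mul (c := C) continuous_ac.aestronglyMeasurable (Eventually.of_forall fun z => hC z)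
  rw [← integral_sub i1 i2, ← Real.norm_eq_abs]
  have hK0 : 0 ≤ K := (abs_nonneg _).trans (hG.first_order hρ1 hε hs0 hh hB hM 0)
  refine (norm_integral_le_of_norm_le (fi.const_mul (ε ^ (-1 - Y) * K))
    (Eventually.of_forall fun z => ?_)).trans ?_
  · rw [← sub_mul, norm_mul, Real.norm_of_nonneg (h0 z), Real.norm_eq_abs]
    have := h0 z
    gcongr
    have h1 := hG.first_order hρ1 hε hs0 hh hB hM z
    unfold ac
    rw [integral_const_mul, ← mul_sub, abs_mul, abs_of_nonneg (by positivity : 0 ≤ ε ^ (-1 - Y))]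
    gcongr
  · rw [integral_const_mul]
    calc _ ≤ ε ^ (-1 - Y) * K * (2 * ε * A) := by gcongr
      _ = 2 * A * (ε ^ (-1 - Y) * ε) * K := by ring
      _ = _ := by
        congr 2
        nth_rewrite 2 [← Real.rpow_one ε]
        rw [← Real.rpow_add hε]
        congr 1; ring

end

theorem rough_total {Y Cp Cm ε Q A b h : ℝ} {s : ℝ≥0} {q f : ℝ → ℝ} (hY1 : 1 < Y) (hY2 : Y < 2)
    (hCp : 0 < Cp) (hCm : 0 < Cm) (hq : ∀ x, 0 ≤ q x) (hqm : Measurable q) (hQ : ∀ x, q x ≤ Q)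
    (hε : 0 < ε) (hε1 : ε ≤ 1) (hh : 0 ≤ h) {μ : Measure ℝ} [IsProbabilityMeasure μ]
    (hμ : ∀ u : ℝ, charFun μ u
      = Complex.exp (-(s * u ^ 2 / 2 : ℝ) + h * Psi b (levyMeasure Y Cp Cm q) u))
    {G₁ : ℝ → ℂ} (hG₁ : FRep (bPhi : ℝ → ℝ) G₁) {G₂ : ℝ → ℂ} (hG₂ : FRep (Ac Y Cp Cm) G₂)
    (hf : Measurable f) (h0 : ∀ x, 0 ≤ f x) (hA : ∀ x, f x ≤ A)
    (hs : ∀ x, f x ≠ 0 → ε / 2 ≤ |x| ∧ |x| ≤ ε) {L B Mt : ℝ}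
    (hL : (Cp + Cm) * Q * Km Y * ε ^ (-Y) = L) (hB : |b| / ε + 19 * L = B)
    (hMt : (∫ v : ℝ, (1 + v ^ 2) ^ 2 * ‖G₁ v‖) * (h * B) ^ 2
      + (gaussianReal 0 s).real {y | ε / 8 ≤ |y|} = Mt) :
    |(∫ z, f z ∂μ) - h * ∫ x, sd Y Cp Cm x * f x|
      ≤ A * (Mt + 2 * (h * (256 * L)) ^ 2)
        + h * (A * (256 * L + 256 * ((Cp + Cm) * Km Y * ε ^ (-Y))) * Mt
            + A * ∫ x, |q x - 1| * ac Y Cp Cm ε x)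
        + h * (2 * A * ε ^ (-Y) * ((∫ v : ℝ, (1 + v ^ 2) ^ 2 * ‖G₂ v‖) * (h * B + s / ε ^ 2))) := by
  set ν := levyMeasure Y Cp Cm q with hνdef
  obtain ⟨hν, hνL⟩ := levy_mfun (Q := Q) hY1 hY2 hCp hCm hq hqm hQ hε
  rw [hL] at hνL
  have hν1 : Integrable mfun ν := by
    have := (levy_mfun (Q := Q) (ε := 1) hY1 hY2 hCp hCm hq hqm hQ one_pos).1
    simpa using this
  have hA0 : 0 ≤ A := (h0 0).trans (hA 0)
  have hfin := finite_restrict hν1 (a := ε / 16) (by positivity)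
  change IsFiniteMeasure (ν.restrict (bigSet ε)) at hfin
  have hfin2 : IsFiniteMeasure (ENNReal.ofReal h • ν.restrict (bigSet ε)) :=
    Measure.smul_finite _ ENNReal.ofReal_ne_top
  obtain ⟨M, hM, hMc, hMμ, hMtail⟩ := decomp (b := b) hε hε1 hν1 hν hνL hh hμ hG₁
  rw [hB, hMt] at hMtail
  have hmass := big_mass hε hν1 hν hνL
  have hS : MeasurableSet {y : ℝ | ε / 4 ≤ |y|} := measurableSet_le (by fun_prop) (by fun_prop)
  have hl0 : 0 ≤ (ν.restrict (bigSet ε)).real univ := measureReal_nonneg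
  have hm0 : 0 ≤ M.real {y | ε / 4 ≤ |y|} := measureReal_nonneg
  have hbn : ∀ v : ℝ, ‖Psi (b - ∫ x in bigSet ε, trunc x ∂ν) (ν.restrict (bigSet ε)ᶜ) (ε⁻¹ * v)‖
      ≤ B * (1 + v ^ 2) := by
    intro v; rw [← hB]; exact Psi_bound_small b hε hε1 hν1 hν hνL v
  -- step 1
  have s1 : |(∫ z, f z ∂μ) - h * ∫ y, ∫ x, f (y + x) ∂(ν.restrict (bigSet ε)) ∂M|
      ≤ A * (Mt + 2 * (h * (256 * L)) ^ 2) := by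
    have := rough_one (M := M) (ρ := ENNReal.ofReal h • ν.restrict (bigSet ε)) hf hε h0 hA
      (fun x hx => (hs x hx).1)
    rw [← hMμ] at this
    simp_rw [integral_smul_measure, ENNReal.toReal_ofReal hh, smul_eq_mul] at this
    rw [integral_const_mul, measureReal_ennreal_smul_apply, ENNReal.toReal_ofReal hh] at this
    refine this.trans ?_
    gcongr
  -- step 2
  have s2 : |(∫ y, ∫ x, f (y + x) ∂(ν.restrict (bigSet ε)) ∂M)
      - ∫ y, ∫ x, ac Y Cp Cm ε x * f (y + x) ∂volume ∂M|
      ≤ A * (256 * L + 256 * ((Cp + Cm) * Km Y * ε ^ (-Y))) * Mt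
            + A * ∫ x, |q x - 1| * ac Y Cp Cm ε x := by
    obtain ⟨m1, p1, u1⟩ := shift_integral (ρ := ν.restrict (bigSet ε)) hf h0 hA
    have i1 : Integrable (fun y => ∫ x, f (y + x) ∂(ν.restrict (bigSet ε))) M :=
      bdd_integrable m1 p1 u1
    have i2 : Integrable (fun y => ∫ x, ac Y Cp Cm ε x * f (y + x)) M := by
      have m2 : Measurable (fun y => ∫ x, ac Y Cp Cm ε x * f (y + x)) := by
        have : StronglyMeasurable (fun p : ℝ × ℝ => ac Y Cp Cm ε p.2 * f (p.1 + p.2)) :=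
          (((continuous_ac.measurable).comp measurable_snd).mul
            (hf.comp (by fun_prop))).stronglyMeasurable
        exact this.integral_prod_right'.measurable
      refine bdd_integrable m2 (A := A * ∫ x, ac Y Cp Cm ε x)
        (fun y => integral_nonneg fun x => mul_nonneg (ac_nonneg hCp hCm hε x) (h0 _)) fun y => ?_
      rw [← integral_const_mul]
      refine integral_mono_of_nonneg
        (Eventually.of_forall fun x => mul_nonneg (ac_nonneg hCp hCm hε x) (h0 _))
        ((integrable_ac hε).const_mul _) (Eventually.of_forall fun x => ?_)
      have := ac_nonneg (Y := Y) hCp hCm hε x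
      have := hA (y + x)
      simp only
      nlinarith
    rw [← integral_sub i1 i2, ← Real.norm_eq_abs]
    obtain ⟨ib, ie⟩ := ind_tail M hS (A * ((ν.restrict (bigSet ε)).real univ + ∫ x, ac Y Cp Cm ε x))
      (A * ∫ x, |q x - 1| * ac Y Cp Cm ε x)
    refine (norm_integral_le_of_norm_le ib (Eventually.of_forall fun y =>
      jump_pointwise hCp hCm hq hqm hQ hε hν1 hf h0 hA hs y)).trans ?_
    rw [ie]
    have := ac_mass hY1 hY2 hCp hCm hε
    have h5 : 0 ≤ ∫ x, ac Y Cp Cm ε x := integral_nonneg fun x => ac_nonneg hCp hCm hε x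
    have h6 : 0 ≤ 256 * L + 256 * ((Cp + Cm) * Km Y * ε ^ (-Y)) := by linarith
    gcongr
  have s3 := jump_smooth (f := f) (A := A) hG₂ (hν1.integrableOn (s := (bigSet ε)ᶜ)) hε s.2 hh hbn hMc
    hf h0 hA hs
  have s2' := mul_le_mul_of_nonneg_left s2 hh
  have s3' := mul_le_mul_of_nonneg_left s3 hh
  rw [← abs_of_nonneg hh, ← abs_mul, abs_of_nonneg hh, mul_sub] at s2' s3'
  calc _ = |((∫ z, f z ∂μ) - h * ∫ y, ∫ x, f (y + x) ∂(ν.restrict (bigSet ε)) ∂M)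
      + (h * (∫ y, ∫ x, f (y + x) ∂(ν.restrict (bigSet ε)) ∂M)
          - h * ∫ y, ∫ x, ac Y Cp Cm ε x * f (y + x) ∂volume ∂M)
      + (h * (∫ y, ∫ x, ac Y Cp Cm ε x * f (y + x) ∂volume ∂M) - h * ∫ x, sd Y Cp Cm x * f x)| := by
        congr 1; ring
    _ ≤ _ := (abs_add_three _ _ _)
    _ ≤ _ := add_le_add (add_le_add s1 s2') s3'

/-- `x^{2k} χ(x)` -/
def Fs (k : ℕ) (x : ℝ) : ℝ := x ^ (2 * k) * bChi x

theorem exists_FRep_Fs (k : ℕ) : ∃ G, FRep (Fs k) G := by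
  refine exists_FRep _ ?_ ?_
  · exact (contDiff_id.pow _).mul bChi.contDiff
  · exact bChi.hasCompactSupport.mul_left (f := fun x : ℝ => x ^ (2 * k))

theorem Fs_zero {k : ℕ} (hk : 1 ≤ k) : Fs k 0 = 0 := by
  unfold Fs; rw [zero_pow (by omega), zero_mul]

theorem hasDerivAt_Fs {k : ℕ} (hk : 1 ≤ k) : HasDerivAt (Fs k) 0 0 := by
  have h1 : HasDerivAt (fun x : ℝ => x ^ (2 * k)) 0 0 := by
    have := hasDerivAt_pow (2 * k) (0 : ℝ)
    rwa [zero_pow (by omega), mul_zero] at this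
  refine h1.congr_of_eventuallyEq ?_
  filter_upwards [bChi.eventuallyEq_one] with x hx
  simp [Fs, hx]

theorem Fs_nonneg (k : ℕ) (x : ℝ) : 0 ≤ Fs k x := by
  unfold Fs
  rw [pow_mul]
  have := bChi.nonneg (x := x)
  positivity

theorem Fs_le (k : ℕ) (x : ℝ) : Fs k x ≤ x ^ (2 * k) := by
  unfold Fs
  have h0 : 0 ≤ x ^ (2 * k) := by rw [pow_mul]; positivity
  have := bChi.le_one (x := x)
  nlinarith

theorem Fs_eq (k : ℕ) {x : ℝ} (hx : |x| ≤ 1 / 2) : Fs k x = x ^ (2 * k) := by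
  unfold Fs; rw [bump_one bChi hx, mul_one]

theorem Fs_out (k : ℕ) {x : ℝ} (hx : 1 ≤ |x|) : Fs k x = 0 := by
  unfold Fs; rw [bump_zero bChi hx, mul_zero]

theorem continuous_Fs (k : ℕ) : Continuous (Fs k) := by
  unfold Fs
  exact (continuous_pow _).mul bChi.continuous

theorem Fs_le_sq {k : ℕ} (hk : 1 ≤ k) (x : ℝ) : Fs k x ≤ x ^ 2 := by
  by_cases hx : 1 ≤ |x|
  · rw [Fs_out k hx]; positivity
  · refine (Fs_le k x).trans ?_
    push Not at hx
    rw [pow_mul]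
    have h1 : x ^ 2 ≤ 1 := by rw [← sq_abs]; nlinarith [abs_nonneg x]
    exact pow_le_of_le_one (sq_nonneg x) h1 (by omega)

theorem smooth_total {Y Cp Cm ε Q b h : ℝ} {s : ℝ≥0} {q : ℝ → ℝ} {k : ℕ} (hk : 1 ≤ k)
    (hY1 : 1 < Y) (hY2 : Y < 2)
    (hCp : 0 < Cp) (hCm : 0 < Cm) (hq : ∀ x, 0 ≤ q x) (hqm : Measurable q) (hQ : ∀ x, q x ≤ Q)
    (hε : 0 < ε) (hε1 : ε ≤ 1) (hh : 0 ≤ h) {μ : Measure ℝ} [IsProbabilityMeasure μ]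
    (hμ : ∀ u : ℝ, charFun μ u
      = Complex.exp (-(s * u ^ 2 / 2 : ℝ) + h * Psi b (levyMeasure Y Cp Cm q) u))
    {G : ℝ → ℂ} (hG : FRep (Fs k) G) {L B : ℝ}
    (hL : (Cp + Cm) * Q * Km Y * ε ^ (-Y) = L) (hB : |b| / ε + 19 * L = B) :
    |(∫ y, Fs k (ε⁻¹ * y) ∂μ) - (∫ y, Fs k (ε⁻¹ * y) ∂(gaussianReal 0 s))
        - h * ∫ x, levyDensity Y Cp Cm q x * Fs k (ε⁻¹ * x)|
      ≤ (∫ v : ℝ, (1 + v ^ 2) ^ 2 * ‖G v‖) * (h * B * (h * B + s / ε ^ 2)) := by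
  obtain ⟨hν, hνL⟩ := levy_mfun (Q := Q) hY1 hY2 hCp hCm hq hqm hQ hε
  rw [hL] at hνL
  have hν1 : Integrable mfun (levyMeasure Y Cp Cm q) := by
    have := (levy_mfun (Q := Q) (ε := 1) hY1 hY2 hCp hCm hq hqm hQ one_pos).1
    simpa using this
  have hL0 : 0 ≤ L := (integral_nonneg fun x => mfun_nonneg _).trans hνL
  have := hG.second_order (hasDerivAt_Fs hk) (B := B) hν1 hε hε1 hν hh (by
    intro v
    refine (Psi_bound b hε hε1 hν hνL v).trans ?_
    rw [← hB]
    gcongr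
    norm_num) hμ
  rw [Fs_zero hk] at this
  simp_rw [sub_zero] at this
  rwa [integral_levy hCp hCm hq hqm] at this

theorem q_corr {Y Cp Cm : ℝ} {q : ℝ → ℝ} (hY1 : 1 < Y) (hY2 : Y < 2)
    (hCp : 0 < Cp) (hCm : 0 < Cm)
    (hq_taylor : ∃ αp αm : ℝ, αp ≠ 0 ∧ αm ≠ 0 ∧
      IntegrableOn (fun x => |q x - 1 - αp * x| * x ^ (-Y - 1)) (Set.Ioc (0 : ℝ) 1) ∧
      IntegrableOn (fun x => |q x - 1 - αm * x| * |x| ^ (-Y - 1)) (Set.Ico (-1 : ℝ) 0)) :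
    ∃ C : ℝ, 0 ≤ C ∧ ∀ ε : ℝ, 0 < ε → 3 * ε ≤ 1 → ∃ g : ℝ → ℝ, Integrable g ∧ (∀ x, 0 ≤ g x) ∧
      ∫ x, g x ≤ C * ε ^ (-(Y / 2)) ∧
      ∀ x, |x| ≤ 3 * ε → (ε⁻¹ * x) ^ 2 * (|q x - 1| * sd Y Cp Cm x) ≤ g x := by
  obtain ⟨αp, αm, -, -, h1, h2⟩ := hq_taylor
  set g1 : ℝ → ℝ := (Ioc (0 : ℝ) 1).indicator (fun x => |q x - 1 - αp * x| * x ^ (-Y - 1)) with hg1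
  set g2 : ℝ → ℝ := (Ico (-1 : ℝ) 0).indicator (fun x => |q x - 1 - αm * x| * |x| ^ (-Y - 1)) with hg2
  have i1 : Integrable g1 := (integrable_indicator_iff measurableSet_Ioc).2 h1
  have i2 : Integrable g2 := (integrable_indicator_iff measurableSet_Ico).2 h2
  have p1 : ∀ x, 0 ≤ g1 x := fun x => indicator_nonneg (fun y hy => by have := hy.1; positivity) x
  have p2 : ∀ x, 0 ≤ g2 x := fun x => indicator_nonneg (fun y hy => by positivity) x
  set a := |αp| + |αm| with ha
  have ha0 : 0 ≤ a := by positivity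
  refine ⟨(Cp + Cm) * (9 * (∫ x, g1 x) + 9 * (∫ x, g2 x) + 18 * a), ?_, fun ε hε hε1 => ?_⟩
  · have : 0 ≤ ∫ x, g1 x := integral_nonneg p1
    have : 0 ≤ ∫ x, g2 x := integral_nonneg p2
    positivity
  set c := a * (3 * ε ^ (-Y)) with hc
  set g3 : ℝ → ℝ := (Icc (-(3 * ε)) (3 * ε)).indicator (fun _ => c) with hg3
  have hc0 : 0 ≤ c := by positivity
  have i3 : Integrable g3 := by
    refine (integrable_indicator_iff measurableSet_Icc).2 (integrableOn_const (by simp) (by simp))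
  have p3 : ∀ x, 0 ≤ g3 x := fun x => indicator_nonneg (fun y hy => hc0) x
  have e3 : ∫ x, g3 x = 6 * ε * c := by
    rw [hg3, integral_indicator measurableSet_Icc, setIntegral_const]
    simp [Measure.real, Real.volume_Icc]
    left; rw [ENNReal.toReal_ofReal (by linarith)]; ring
  refine ⟨fun x => (Cp + Cm) * (9 * g1 x + 9 * g2 x + g3 x), ?_, ?_, ?_, ?_⟩
  · exact (((i1.const_mul 9).add (i2.const_mul 9)).add i3).const_mul _
  · intro x; have := p1 x; have := p2 x; have := p3 x; positivity
  · rw [integral_const_mul, integral_add, integral_add (i1.const_mul 9) (i2.const_mul 9),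
      integral_const_mul, integral_const_mul, e3, mul_assoc (Cp + Cm)]
    · have : 0 ≤ ∫ x, g1 x := integral_nonneg p1
      have : 0 ≤ ∫ x, g2 x := integral_nonneg p2
      have hr1 : 1 ≤ ε ^ (-(Y / 2)) :=
        Real.one_le_rpow_of_pos_of_le_one_of_nonpos hε (by linarith) (by linarith)
      have hr2 : ε * ε ^ (-Y) ≤ ε ^ (-(Y / 2)) := by
        have : ε * ε ^ (-Y) = ε ^ (1 - Y) := by
          rw [sub_eq_add_neg, Real.rpow_add hε, Real.rpow_one]
        rw [this]
        exact Real.rpow_le_rpow_of_exponent_ge hε (by linarith) (by linarith)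
      have : 6 * ε * c = 18 * a * (ε * ε ^ (-Y)) := by rw [hc]; ring
      rw [this]
      refine mul_le_mul_of_nonneg_left ?_ (by positivity)
      rw [add_mul]
      refine add_le_add ?_ (mul_le_mul_of_nonneg_left hr2 (by positivity))
      exact le_mul_of_one_le_right (by positivity) hr1
    · exact (i1.const_mul 9).add (i2.const_mul 9)
    · exact i3
  · intro x hx
    have h3 : g3 x = c := by
      rw [hg3, indicator_of_mem]; exact abs_le.1 hx
    have hp1 := p1 x
    have hp2 := p2 x
    have hsq : (ε⁻¹ * x) ^ 2 ≤ 9 := by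
      rw [← sq_abs, abs_mul, abs_of_pos (inv_pos.2 hε)]
      have : ε⁻¹ * |x| ≤ 3 := by
        rw [inv_mul_le_iff₀ hε]; linarith
      have h0 : 0 ≤ ε⁻¹ * |x| := by positivity
      nlinarith
    -- the common estimate
    have key : ∀ α : ℝ, |α| ≤ a → x ≠ 0 →
        (ε⁻¹ * x) ^ 2 * (|q x - 1| * |x| ^ (-1 - Y))
          ≤ 9 * (|q x - 1 - α * x| * |x| ^ (-Y - 1)) + c := by
      intro α hα hx0
      have hxp : 0 < |x| := abs_pos.2 hx0
      have t1 : |q x - 1| ≤ |q x - 1 - α * x| + |α| * |x| := by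
        rw [← abs_mul]
        have := abs_add_le (q x - 1 - α * x) (α * x)
        simpa using this
      have t2 : (ε⁻¹ * x) ^ 2 * (|α| * |x| * |x| ^ (-1 - Y)) ≤ c := by
        have e1 : (ε⁻¹ * x) ^ 2 * (|α| * |x| * |x| ^ (-1 - Y))
            = |α| * ((ε ^ 2)⁻¹ * |x| ^ (2 - Y)) := by
          have : |x| ^ (2 - Y) = |x| ^ 2 * |x| * |x| ^ (-1 - Y) := by
            rw [show 2 - Y = (2:ℝ) + 1 + (-1 - Y) by ring, Real.rpow_add hxp, Real.rpow_add hxp]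
            norm_num
          rw [this, mul_pow, ← sq_abs x]; field_simp
        rw [e1, hc]
        have e2 : |x| ^ (2 - Y) ≤ 3 * ε ^ (2 - Y) := by
          calc _ ≤ (3 * ε) ^ (2 - Y) := Real.rpow_le_rpow hxp.le hx (by linarith)
            _ = 3 ^ (2 - Y) * ε ^ (2 - Y) := Real.mul_rpow (by norm_num) hε.le
            _ ≤ 3 ^ (1:ℝ) * ε ^ (2 - Y) := by
              gcongr
              · norm_num
              · linarith
            _ = _ := by simp
        have e3 : (ε ^ 2)⁻¹ * (3 * ε ^ (2 - Y)) = 3 * ε ^ (-Y) := by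
          rw [sub_eq_add_neg, Real.rpow_add hε]
          norm_num; field_simp
        rw [← e3]
        gcongr
      have hr : 0 ≤ |x| ^ (-1 - Y) := by positivity
      rw [show -Y - 1 = -1 - Y by ring]
      calc _ ≤ (ε⁻¹ * x) ^ 2 * ((|q x - 1 - α * x| + |α| * |x|) * |x| ^ (-1 - Y)) := by gcongr
        _ = (ε⁻¹ * x) ^ 2 * (|q x - 1 - α * x| * |x| ^ (-1 - Y))
            + (ε⁻¹ * x) ^ 2 * (|α| * |x| * |x| ^ (-1 - Y)) := by ring
        _ ≤ _ := by gcongr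
    rcases lt_trichotomy x 0 with h | h | h
    · have hm : x ∈ Ico (-1 : ℝ) 0 := ⟨by linarith [(abs_le.1 hx).1], h⟩
      have hg : g2 x = |q x - 1 - αm * x| * |x| ^ (-Y - 1) := by
        rw [hg2, indicator_of_mem hm]
      have := key αm (by rw [ha]; linarith [abs_nonneg αp]) h.ne
      have e : sd Y Cp Cm x = Cm * |x| ^ (-1 - Y) := by
        simp [sd, levyDensity, h, not_lt.2 h.le]
      rw [e]
      calc _ = Cm * ((ε⁻¹ * x) ^ 2 * (|q x - 1| * |x| ^ (-1 - Y))) := by ring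
        _ ≤ Cm * (9 * (|q x - 1 - αm * x| * |x| ^ (-Y - 1)) + c) := by gcongr
        _ ≤ (Cp + Cm) * (9 * (|q x - 1 - αm * x| * |x| ^ (-Y - 1)) + c) := by gcongr; linarith
        _ ≤ _ := mul_le_mul_of_nonneg_left (by linarith) (by linarith)
    · subst h; simp [sd, levyDensity]
      have := p1 0; have := p2 0; have := p3 0; positivity
    · have hm : x ∈ Ioc (0 : ℝ) 1 := ⟨h, by linarith [(abs_le.1 hx).2]⟩
      have hg : g1 x = |q x - 1 - αp * x| * |x| ^ (-Y - 1) := by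
        rw [hg1, indicator_of_mem hm, abs_of_pos h]
      have := key αp (by rw [ha]; linarith [abs_nonneg αm]) h.ne'
      have e : sd Y Cp Cm x = Cp * |x| ^ (-1 - Y) := by
        simp [sd, levyDensity, h]
      rw [e]
      calc _ = Cp * ((ε⁻¹ * x) ^ 2 * (|q x - 1| * |x| ^ (-1 - Y))) := by ring
        _ ≤ Cp * (9 * (|q x - 1 - αp * x| * |x| ^ (-Y - 1)) + c) := by gcongr
        _ ≤ (Cp + Cm) * (9 * (|q x - 1 - αp * x| * |x| ^ (-Y - 1)) + c) := by gcongr; linarith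
        _ ≤ _ := mul_le_mul_of_nonneg_left (by linarith) (by linarith)

theorem gauss_moment {v : ℝ≥0} (hv : v ≠ 0) (k : ℕ) :
    ∫ x, x ^ (2 * k) ∂(gaussianReal 0 v) = (Nat.doubleFactorial (2 * k - 1) : ℝ) * (v : ℝ) ^ k := by
  have hv0 : (0 : ℝ) < v := by positivity
  rw [integral_gaussianReal_eq_integral_smul hv]
  have e1 : ∀ x : ℝ, gaussianPDFReal 0 v x • x ^ (2 * k)
      = (fun y : ℝ => (√(2 * π * v))⁻¹ * (y ^ ((2 * k : ℕ) : ℝ) * Real.exp (-(2 * v : ℝ)⁻¹ * y ^ (2 : ℝ)))) |x| := by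
    intro x
    simp only [gaussianPDFReal, smul_eq_mul, sub_zero, Real.rpow_natCast, Real.rpow_ofNat, sq_abs]
    have : |x| ^ (2 * k) = x ^ (2 * k) := by rw [pow_mul, pow_mul, sq_abs]
    rw [this, show -x ^ 2 / (2 * (v:ℝ)) = -(2 * (v:ℝ))⁻¹ * x ^ 2 by ring]
    ring
  simp_rw [e1]
  rw [integral_comp_abs (f := fun y : ℝ => (√(2 * π * v))⁻¹ * (y ^ ((2 * k : ℕ) : ℝ) * Real.exp (-(2 * v : ℝ)⁻¹ * y ^ (2 : ℝ)))),
    integral_const_mul, integral_rpow_mul_exp_neg_mul_rpow (by norm_num)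
      (by have : (0:ℝ) ≤ ((2 * k : ℕ) : ℝ) := by positivity
          linarith) (by positivity)]
  have e2 : (((2 * k : ℕ) : ℝ) + 1) / 2 = k + 1 / 2 := by push_cast; ring
  have e3 : -(((2 * k : ℕ) : ℝ) + 1) / 2 = -(k + 1 / 2) := by push_cast; ring
  rw [e2, e3, Real.Gamma_nat_add_half, Real.rpow_neg (by positivity), Real.inv_rpow (by positivity),
    inv_inv, Real.rpow_add (by positivity), Real.rpow_natCast, ← Real.sqrt_eq_rpow]
  have e4 : √(2 * π * v) = √π * √(2 * v) := by
    rw [← Real.sqrt_mul (by positivity)]; congr 1; ring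
  rw [e4]
  have : √π ≠ 0 := by positivity
  have : √(2 * (v:ℝ)) ≠ 0 := by positivity
  field_simp
  rw [mul_pow]

theorem gauss_integrable_pow (v : ℝ≥0) (m : ℕ) :
    Integrable (fun x : ℝ => x ^ m) (gaussianReal 0 v) := by
  have := (memLp_id_gaussianReal (μ := 0) (v := v) m).integrable_norm_pow'
  refine (integrable_norm_iff (by fun_prop)).1 ?_
  simpa using this

/-- Chebyshev with an even power -/
theorem gauss_tail {v : ℝ≥0} (hv : v ≠ 0) (k m : ℕ) {r : ℝ} (hr : 0 < r) :
    ∫ x, {y : ℝ | r ≤ |y|}.indicator (fun y => y ^ (2 * k)) x ∂(gaussianReal 0 v)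
      ≤ (Nat.doubleFactorial (2 * (k + m) - 1) : ℝ) * (v : ℝ) ^ (k + m) / r ^ (2 * m) := by
  rw [← gauss_moment hv (k + m), ← integral_div]
  refine integral_mono_of_nonneg (Eventually.of_forall fun x => ?_)
    ((gauss_integrable_pow v _).div_const _) (Eventually.of_forall fun x => ?_)
  · exact indicator_nonneg (fun y _ => by rw [pow_mul]; positivity) x
  · simp only
    by_cases hx : r ≤ |x|
    · rw [indicator_of_mem (show x ∈ {y : ℝ | r ≤ |y|} from hx), le_div_iff₀ (by positivity),
        show 2 * (k + m) = 2 * k + 2 * m by ring, pow_add]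
      have h1 : 0 ≤ x ^ (2 * k) := by rw [pow_mul]; positivity
      have h2 : r ^ (2 * m) ≤ x ^ (2 * m) := by
        calc _ ≤ |x| ^ (2 * m) := by gcongr
          _ = _ := by rw [pow_mul, sq_abs, ← pow_mul]
      gcongr
    · rw [indicator_of_notMem (show x ∉ {y : ℝ | r ≤ |y|} from hx)]
      rw [pow_mul]; positivity

/-- the truncated power -/
def f0 (k : ℕ) (ε x : ℝ) : ℝ := {x : ℝ | |x| ≤ ε}.indicator (fun x => x ^ (2 * k)) x

/-- its smooth part -/
def fs (k : ℕ) (ε x : ℝ) : ℝ := ε ^ (2 * k) * Fs k (ε⁻¹ * x)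

theorem even_pow_nonneg (k : ℕ) (x : ℝ) : 0 ≤ x ^ (2 * k) := by rw [pow_mul]; positivity

theorem measurable_f0 (k : ℕ) (ε : ℝ) : Measurable (f0 k ε) :=
  (measurable_id.pow_const _).indicator (measurableSet_le (by fun_prop) (by fun_prop))

theorem continuous_fs (k : ℕ) (ε : ℝ) : Continuous (fs k ε) :=
  continuous_const.mul ((continuous_Fs k).comp (by fun_prop))

theorem f0_in {k : ℕ} {ε x : ℝ} (hx : |x| ≤ ε) : f0 k ε x = x ^ (2 * k) :=
  indicator_of_mem (show x ∈ {x : ℝ | |x| ≤ ε} from hx) _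

theorem f0_out {k : ℕ} {ε x : ℝ} (hx : ¬ |x| ≤ ε) : f0 k ε x = 0 :=
  indicator_of_notMem (show x ∉ {x : ℝ | |x| ≤ ε} from hx) _

theorem f0_nonneg (k : ℕ) (ε x : ℝ) : 0 ≤ f0 k ε x :=
  indicator_nonneg (fun y _ => even_pow_nonneg k y) x

theorem f0_le {k : ℕ} {ε : ℝ} (hε : 0 < ε) (x : ℝ) : f0 k ε x ≤ ε ^ (2 * k) := by
  by_cases hx : |x| ≤ ε
  · rw [f0_in hx, ← Even.pow_abs (even_two_mul k)]
    gcongr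
  · rw [f0_out hx]; positivity

theorem scale_pow {k : ℕ} {ε : ℝ} (hε : 0 < ε) (x : ℝ) :
    ε ^ (2 * k) * (ε⁻¹ * x) ^ (2 * k) = x ^ (2 * k) := by
  rw [← mul_pow]; congr 1; field_simp

theorem fs_nonneg {k : ℕ} {ε : ℝ} (hε : 0 < ε) (x : ℝ) : 0 ≤ fs k ε x :=
  mul_nonneg (by positivity) (Fs_nonneg _ _)

theorem fs_le_pow {k : ℕ} {ε : ℝ} (hε : 0 < ε) (x : ℝ) : fs k ε x ≤ x ^ (2 * k) := by
  rw [← scale_pow hε x]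
  exact mul_le_mul_of_nonneg_left (Fs_le _ _) (by positivity)

theorem fs_out {k : ℕ} {ε x : ℝ} (hε : 0 < ε) (hx : ε ≤ |x|) : fs k ε x = 0 := by
  unfold fs
  rw [Fs_out, mul_zero]
  rw [abs_inv_mul hε, le_div_iff₀ hε]; linarith

theorem fs_eq {k : ℕ} {ε x : ℝ} (hε : 0 < ε) (hx : |x| ≤ ε / 2) : fs k ε x = x ^ (2 * k) := by
  unfold fs
  rw [Fs_eq, scale_pow hε]
  rw [abs_inv_mul hε, div_le_iff₀ hε]; linarith

theorem fs_le_f0 {k : ℕ} {ε : ℝ} (hε : 0 < ε) (x : ℝ) : fs k ε x ≤ f0 k ε x := by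
  by_cases hx : |x| ≤ ε
  · rw [f0_in hx]; exact fs_le_pow hε x
  · rw [f0_out hx, fs_out hε (not_le.1 hx).le]

theorem fr_supp {k : ℕ} {ε x : ℝ} (hε : 0 < ε) (hx : f0 k ε x - fs k ε x ≠ 0) :
    ε / 2 ≤ |x| ∧ |x| ≤ ε := by
  constructor
  · by_contra h
    push Not at h
    apply hx
    rw [f0_in (by linarith), fs_eq hε h.le, sub_self]
  · by_contra h
    apply hx
    rw [f0_out h, fs_out hε (not_le.1 h).le, sub_self]

theorem stable_f0 {Y Cp Cm ε : ℝ} {k : ℕ} (hk : 1 ≤ k) (hY2 : Y < 2) (hε : 0 < ε) :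
    Integrable (fun x => sd Y Cp Cm x * f0 k ε x) ∧
      ∫ x, sd Y Cp Cm x * f0 k ε x = (Cp + Cm) / (2 * k - Y) * ε ^ (2 * (k : ℝ) - Y) := by
  have hk' : (1 : ℝ) ≤ k := by exact_mod_cast hk
  set p : ℝ := 2 * k - Y - 1 with hp
  set g : ℝ → ℝ := (Ioc 0 ε).indicator (fun x => x ^ p) with hg
  have hp1 : -1 < p := by rw [hp]; linarith
  have ig : Integrable g := by
    refine (integrable_indicator_iff measurableSet_Ioc).2 ?_
    exact (intervalIntegrable_iff_integrableOn_Ioc_of_le hε.le).1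
      (intervalIntegral.intervalIntegrable_rpow' hp1)
  have eg : ∫ x, g x = ε ^ (2 * (k : ℝ) - Y) / (2 * k - Y) := by
    rw [hg, integral_indicator measurableSet_Ioc, ← intervalIntegral.integral_of_le hε.le,
      integral_rpow (Or.inl hp1), Real.zero_rpow (by linarith), hp]
    simp
  have hpt : ∀ x, sd Y Cp Cm x * f0 k ε x = Cp * g x + Cm * g (-x) := by
    have key : ∀ x, 0 < x → |x| ^ (-1 - Y) * f0 k ε x = g x := by
      intro x hx
      by_cases hxe : x ≤ ε
      · rw [f0_in (by rwa [abs_of_pos hx]), hg, indicator_of_mem (show x ∈ Ioc 0 ε from ⟨hx, hxe⟩), abs_of_pos hx,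
          ← Real.rpow_natCast, ← Real.rpow_add hx]
        congr 1; rw [hp]; push_cast; ring
      · rw [f0_out (by rwa [abs_of_pos hx]), hg, indicator_of_notMem (fun h => hxe h.2), mul_zero]
    have hneg : ∀ x, x ≤ 0 → g x = 0 := fun x hx => by
      rw [hg, indicator_of_notMem (fun h => absurd h.1 (not_lt.2 hx))]
    have hf : ∀ x, f0 k ε (-x) = f0 k ε x := by
      intro x
      unfold f0
      simp [indicator, (even_two_mul k).neg_pow]
    intro x
    rcases lt_trichotomy x 0 with h | h | h
    · have := key (-x) (by linarith)
      rw [abs_neg, hf] at this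
      rw [hneg x h.le, ← this]
      simp [sd, levyDensity, h, not_lt.2 h.le, mul_assoc]
    · subst h; rw [neg_zero, hneg 0 le_rfl]; simp [sd, levyDensity]
    · rw [hneg (-x) (by linarith), ← key x h]
      simp [sd, levyDensity, h, mul_assoc]
  have ig' : Integrable (fun x => g (-x)) := ig.comp_neg
  simp_rw [hpt]
  refine ⟨(ig.const_mul _).add (ig'.const_mul _), ?_⟩
  rw [integral_add (ig.const_mul _) (ig'.const_mul _), integral_const_mul, integral_const_mul,
    integral_neg_eq_self g, eg]
  ring

theorem q_fs {Y Cp Cm ε Q : ℝ} {q g : ℝ → ℝ} {k : ℕ} (hk : 1 ≤ k) (hY2 : Y < 2)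
    (hCp : 0 < Cp) (hCm : 0 < Cm) (hq : ∀ x, 0 ≤ q x) (hqm : Measurable q) (hQ : ∀ x, q x ≤ Q)
    (hε : 0 < ε) (ig : Integrable g) (hg0 : ∀ x, 0 ≤ g x)
    (hg : ∀ x, |x| ≤ 3 * ε → (ε⁻¹ * x) ^ 2 * (|q x - 1| * sd Y Cp Cm x) ≤ g x) :
    |(∫ x, levyDensity Y Cp Cm q x * Fs k (ε⁻¹ * x)) - ∫ x, sd Y Cp Cm x * Fs k (ε⁻¹ * x)|
      ≤ ∫ x, g x := by
  have i1 : Integrable (fun x => sd Y Cp Cm x * Fs k (ε⁻¹ * x)) := by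
    have : Integrable (fun x => sd Y Cp Cm x * fs k ε x) := by
      refine (stable_f0 (Cp := Cp) (Cm := Cm) hk hY2 hε).1.mono'
        (measurable_sd.mul (continuous_fs k ε).measurable).aestronglyMeasurable
        (Eventually.of_forall fun x => ?_)
      rw [Real.norm_of_nonneg (mul_nonneg (sd_nonneg hCp hCm x) (fs_nonneg hε x))]
      exact mul_le_mul_of_nonneg_left (fs_le_f0 hε x) (sd_nonneg hCp hCm x)
    refine (this.const_mul (ε ^ (2 * k))⁻¹).congr (Eventually.of_forall fun x => ?_)
    simp only [fs]; field_simp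
  have hb : ∀ x, |q x - 1| * (sd Y Cp Cm x * Fs k (ε⁻¹ * x)) ≤ g x := by
    intro x
    by_cases hx : |x| ≤ 3 * ε
    · refine le_trans ?_ (hg x hx)
      have h1 := Fs_le_sq hk (ε⁻¹ * x)
      have h2 := sd_nonneg (Y := Y) hCp hCm x
      calc _ ≤ |q x - 1| * (sd Y Cp Cm x * (ε⁻¹ * x) ^ 2) := by gcongr
        _ = _ := by ring
    · rw [Fs_out k, mul_zero, mul_zero]; · exact hg0 x
      rw [abs_inv_mul hε, le_div_iff₀ hε]; linarith
  have i2 : Integrable (fun x => levyDensity Y Cp Cm q x * Fs k (ε⁻¹ * x)) := by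
    refine (i1.const_mul Q).mono' ((measurable_levyDensity hqm).mul
      ((continuous_Fs k).comp (by fun_prop)).measurable).aestronglyMeasurable
        (Eventually.of_forall fun x => ?_)
    rw [Real.norm_of_nonneg (mul_nonneg (levyDensity_nonneg hCp hCm hq x) (Fs_nonneg _ _)),
      levyDensity_mul, mul_assoc]
    exact mul_le_mul_of_nonneg_right (hQ x) (mul_nonneg (sd_nonneg hCp hCm x) (Fs_nonneg _ _))
  rw [← integral_sub i2 i1, ← Real.norm_eq_abs]
  refine norm_integral_le_of_norm_le ig (Eventually.of_forall fun x => ?_)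
  refine le_trans (le_of_eq ?_) (hb x)
  have h2 := sd_nonneg (Y := Y) hCp hCm x
  have h3 := Fs_nonneg k (ε⁻¹ * x)
  rw [levyDensity_mul]
  change ‖q x * sd Y Cp Cm x * _ - _‖ = _
  rw [show q x * sd Y Cp Cm x * Fs k (ε⁻¹ * x) - sd Y Cp Cm x * Fs k (ε⁻¹ * x)
    = (q x - 1) * (sd Y Cp Cm x * Fs k (ε⁻¹ * x)) by ring, Real.norm_eq_abs, abs_mul,
    abs_of_nonneg (mul_nonneg h2 h3)]

theorem q_ac {Y Cp Cm ε : ℝ} {q g : ℝ → ℝ}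
    (hCp : 0 < Cp) (hCm : 0 < Cm)
    (hε : 0 < ε) (ig : Integrable g) (hg0 : ∀ x, 0 ≤ g x)
    (hg : ∀ x, |x| ≤ 3 * ε → (ε⁻¹ * x) ^ 2 * (|q x - 1| * sd Y Cp Cm x) ≤ g x) :
    ∫ x, |q x - 1| * ac Y Cp Cm ε x ≤ 256 * ∫ x, g x := by
  rw [← integral_const_mul]
  refine integral_mono_of_nonneg (Eventually.of_forall fun x =>
    mul_nonneg (abs_nonneg _) (ac_nonneg hCp hCm hε x)) (ig.const_mul _)
    (Eventually.of_forall fun x => ?_)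
  simp only
  by_cases h : |x| ≤ ε / 16 ∨ 3 * ε ≤ |x|
  · rw [ac_zero hε h, mul_zero]; have := hg0 x; positivity
  · push Not at h
    have h1 := hg x h.2.le
    have h2 : 1 ≤ 256 * (ε⁻¹ * x) ^ 2 := by
      have : 1 / 16 ≤ |ε⁻¹ * x| := by
        rw [abs_inv_mul hε, le_div_iff₀ hε]; linarith [h.1]
      rw [← sq_abs]; nlinarith
    have h3 := ac_le (Y := Y) hCp hCm hε x
    have h4 := sd_nonneg (Y := Y) hCp hCm x
    calc _ ≤ 1 * (|q x - 1| * sd Y Cp Cm x) := by rw [one_mul]; gcongr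
      _ ≤ (256 * (ε⁻¹ * x) ^ 2) * (|q x - 1| * sd Y Cp Cm x) := by gcongr
      _ ≤ _ := by rw [mul_assoc]; gcongr

theorem gauss_fs {s : ℝ≥0} (hs : s ≠ 0) {k m : ℕ} {ε h σ : ℝ} (hε : 0 < ε) (hh : 0 < h)
    (hsv : (s : ℝ) = σ ^ 2 * h) (hhε : h ≤ ε ^ 2) :
    |(∫ x, fs k ε x ∂(gaussianReal 0 s)) - (Nat.doubleFactorial (2 * k - 1) : ℝ) * (s : ℝ) ^ k|
      ≤ ((Nat.doubleFactorial (2 * (k + m) - 1) : ℝ) * (σ ^ 2) ^ (k + m) * 4 ^ m)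
        * (ε ^ (2 * k) * (h / ε ^ 2) ^ m) := by
  have hi := gauss_integrable_pow s (2 * k)
  have hifs : Integrable (fs k ε) (gaussianReal 0 s) :=
    hi.mono' (continuous_fs k ε).aestronglyMeasurable (Eventually.of_forall fun x => by
      rw [Real.norm_of_nonneg (fs_nonneg hε x)]; exact fs_le_pow hε x)
  have hS : MeasurableSet {y : ℝ | ε / 2 ≤ |y|} := measurableSet_le (by fun_prop) (by fun_prop)
  rw [← gauss_moment hs k, ← integral_sub hifs hi, ← Real.norm_eq_abs]
  refine (norm_integral_le_of_norm_le (hi.indicator hS) (Eventually.of_forall fun x => ?_)).trans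
    ((gauss_tail hs k m (r := ε / 2) (by positivity)).trans ?_)
  · by_cases hx : ε / 2 ≤ |x|
    · rw [indicator_of_mem (show x ∈ {y : ℝ | ε / 2 ≤ |y|} from hx), Real.norm_eq_abs, abs_sub_comm,
        abs_of_nonneg (by linarith [fs_le_pow (k := k) hε x])]
      linarith [fs_nonneg (k := k) hε x]
    · rw [indicator_of_notMem (show x ∉ {y : ℝ | ε / 2 ≤ |y|} from hx), fs_eq hε (not_le.1 hx).le]
      simp
  · rw [hsv, mul_pow, pow_add h, div_pow ε, pow_mul ε 2 m, div_pow h, pow_mul 2 2 m]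
    have : h ^ k ≤ ε ^ (2 * k) := by rw [pow_mul]; gcongr
    calc _ = ((Nat.doubleFactorial (2 * (k + m) - 1) : ℝ) * (σ ^ 2) ^ (k + m) * 4 ^ m)
        * (h ^ k * (h ^ m / (ε ^ 2) ^ m)) := by norm_num; field_simp
      _ ≤ _ := by gcongr

theorem gauss_prob {s : ℝ≥0} (hs : s ≠ 0) {m : ℕ} {ε h σ : ℝ} (hε : 0 < ε)
    (hsv : (s : ℝ) = σ ^ 2 * h) :
    (gaussianReal 0 s).real {y | ε / 8 ≤ |y|}
      ≤ ((Nat.doubleFactorial (2 * m - 1) : ℝ) * (σ ^ 2) ^ m * 64 ^ m) * (h / ε ^ 2) ^ m := by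
  have hS : MeasurableSet {y : ℝ | ε / 8 ≤ |y|} := measurableSet_le (by fun_prop) (by fun_prop)
  have := gauss_tail hs 0 m (r := ε / 8) (by positivity)
  rw [← integral_indicator_one hS]
  refine le_trans (le_of_eq ?_) (this.trans (le_of_eq ?_))
  · congr 1
  · rw [hsv, zero_add, mul_pow, div_pow ε, pow_mul ε 2 m, div_pow h, pow_mul 8 2 m]
    field_simp; norm_num

set_option maxHeartbeats 2000000 in
theorem main_bound {Y Cp Cm σ b Q : ℝ} {q : ℝ → ℝ} (hY1 : 1 < Y) (hY2 : Y < 2)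
    (hCp : 0 < Cp) (hCm : 0 < Cm) (hσ : 0 < σ)
    (hq : ∀ x, 0 ≤ q x) (hqm : Measurable q) (hQ : ∀ x, q x ≤ Q)
    (hq_taylor : ∃ αp αm : ℝ, αp ≠ 0 ∧ αm ≠ 0 ∧
      IntegrableOn (fun x => |q x - 1 - αp * x| * x ^ (-Y - 1)) (Set.Ioc (0 : ℝ) 1) ∧
      IntegrableOn (fun x => |q x - 1 - αm * x| * |x| ^ (-Y - 1)) (Set.Ico (-1 : ℝ) 0))
    {k : ℕ} (hk : 1 ≤ k) (m : ℕ) :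
    ∃ K : ℝ, 0 ≤ K ∧ ∀ (h ε : ℝ) (s : ℝ≥0) (μ : Measure ℝ) [IsProbabilityMeasure μ],
      0 < h → 0 < ε → 3 * ε ≤ 1 → h ≤ ε ^ 2 → (h / ε ^ 2) ^ m ≤ h ^ 2 → (s : ℝ) = σ ^ 2 * h →
      (∀ u : ℝ, charFun μ u
        = Complex.exp (-(s * u ^ 2 / 2 : ℝ) + h * Psi b (levyMeasure Y Cp Cm q) u)) →
      |(∫ x, f0 k ε x ∂μ) - (Nat.doubleFactorial (2 * k - 1) : ℝ) * (s : ℝ) ^ k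
        - h * ((Cp + Cm) / (2 * k - Y) * ε ^ (2 * (k : ℝ) - Y))|
      ≤ K * (ε ^ (2 * k) * (h * ε ^ (-Y) * (h / ε ^ 2)) + ε ^ (2 * k) * (h * ε ^ (-(Y / 2)))) := by
  obtain ⟨C, hC0, hC⟩ := q_corr hY1 hY2 hCp hCm hq_taylor
  obtain ⟨G, hG⟩ := exists_FRep_Fs k
  obtain ⟨G₁, hG₁⟩ := exists_FRep_bump bPhi
  obtain ⟨G₂, hG₂⟩ := exists_FRep _ (contDiff_Ac Y Cp Cm) (compact_Ac Y Cp Cm)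
  have hQ0 : 0 ≤ Q := (hq 0).trans (hQ 0)
  obtain ⟨K0, hK0⟩ : ∃ K0, (∫ v : ℝ, (1 + v ^ 2) ^ 2 * ‖G v‖) = K0 := ⟨_, rfl⟩
  obtain ⟨K1, hK1⟩ : ∃ K1, (∫ v : ℝ, (1 + v ^ 2) ^ 2 * ‖G₁ v‖) = K1 := ⟨_, rfl⟩
  obtain ⟨K2, hK2⟩ : ∃ K2, (∫ v : ℝ, (1 + v ^ 2) ^ 2 * ‖G₂ v‖) = K2 := ⟨_, rfl⟩
  have pK0 : 0 ≤ K0 := by rw [← hK0]; exact integral_nonneg fun v => by positivity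
  have pK1 : 0 ≤ K1 := by rw [← hK1]; exact integral_nonneg fun v => by positivity
  have pK2 : 0 ≤ K2 := by rw [← hK2]; exact integral_nonneg fun v => by positivity
  obtain ⟨D1, hD1⟩ : ∃ D1, (Nat.doubleFactorial (2 * (k + m) - 1) : ℝ) * (σ ^ 2) ^ (k + m) * 4 ^ m = D1 :=
    ⟨_, rfl⟩
  obtain ⟨D2, hD2⟩ : ∃ D2, (Nat.doubleFactorial (2 * m - 1) : ℝ) * (σ ^ 2) ^ m * 64 ^ m = D2 := ⟨_, rfl⟩
  have pD1 : 0 ≤ D1 := by rw [← hD1]; positivity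
  have pD2 : 0 ≤ D2 := by rw [← hD2]; positivity
  have hKm := Km_nonneg Y
  obtain ⟨c1, hc1⟩ : ∃ c1, (Cp + Cm) * Q * Km Y = c1 := ⟨_, rfl⟩
  obtain ⟨c3, hc3⟩ : ∃ c3, (Cp + Cm) * Km Y = c3 := ⟨_, rfl⟩
  have pc1 : 0 ≤ c1 := by rw [← hc1]; positivity
  have pc3 : 0 ≤ c3 := by rw [← hc3]; positivity
  obtain ⟨c2, hc2⟩ : ∃ c2, |b| + 19 * c1 = c2 := ⟨_, rfl⟩
  have pc2 : 0 ≤ c2 := by rw [← hc2]; positivity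
  obtain ⟨cM, hcM⟩ : ∃ cM, K1 * c2 ^ 2 + D2 = cM := ⟨_, rfl⟩
  have pcM : 0 ≤ cM := by rw [← hcM]; positivity
  refine ⟨K0 * (c2 * (c2 + σ ^ 2)) + D1 + (cM + 2 * (256 * c1) ^ 2) + (256 * c1 + 256 * c3) * cM
    + 2 * K2 * (c2 + σ ^ 2) + 257 * C, by positivity, ?_⟩
  intro h ε s μ _ hh hε hε3 hhε hm hsv hμ
  have hε1 : ε ≤ 1 := by linarith
  have hs0 : s ≠ 0 := by
    intro h0; rw [h0] at hsv; simp at hsv; rcases hsv with hsv | hsv <;> linarith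
  obtain ⟨g, ig, pg, eg, hg⟩ := hC ε hε hε3
  obtain ⟨y, hy⟩ : ∃ y, ε ^ (-Y) = y := ⟨_, rfl⟩
  obtain ⟨z, hz⟩ : ∃ z, ε ^ (-(Y / 2)) = z := ⟨_, rfl⟩
  obtain ⟨E, hE⟩ : ∃ E, ε ^ (2 * k) = E := ⟨_, rfl⟩
  obtain ⟨t, ht⟩ : ∃ t, h / ε ^ 2 = t := ⟨_, rfl⟩
  have pE : 0 ≤ E := by rw [← hE]; positivity
  have py : 0 ≤ y := by rw [← hy]; positivity
  have pz : 0 ≤ z := by rw [← hz]; positivity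
  have pt : 0 ≤ t := by rw [← ht]; positivity
  have y1 : 1 ≤ y := by
    rw [← hy]; exact Real.one_le_rpow_of_pos_of_le_one_of_nonpos hε hε1 (by linarith)
  have y2 : 1 / ε ≤ y := by
    rw [← hy, one_div, ← Real.rpow_neg_one]
    exact Real.rpow_le_rpow_of_exponent_ge hε hε1 (by linarith)
  have y3 : y ≤ 1 / ε ^ 2 := by
    rw [← hy, one_div, ← Real.rpow_natCast, ← Real.rpow_neg hε.le]
    exact Real.rpow_le_rpow_of_exponent_ge hε hε1 (by push_cast; linarith)
  have ht1 : t ≤ 1 := by rw [← ht, div_le_one (by positivity)]; exact hhε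
  have hth : h ≤ t := by
    rw [← ht, le_div_iff₀ (by positivity)]
    exact mul_le_of_le_one_right hh.le (pow_le_one₀ hε.le hε1)
  have hwt : h * y ≤ t := by
    calc h * y ≤ h * (1 / ε ^ 2) := by gcongr
      _ = t := by rw [← ht]; ring
  obtain ⟨w, hw⟩ : ∃ w, h * y = w := ⟨_, rfl⟩
  have pw : 0 ≤ w := by rw [← hw]; positivity
  have hw1 : w ≤ 1 := by linarith
  have hwh : h ≤ w := by rw [← hw]; exact le_mul_of_one_le_right hh.le y1
  have hww : w * w ≤ w * t := mul_le_mul_of_nonneg_left (by linarith) pw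
  have hhT : h ^ 2 ≤ w * t := by rw [sq]; exact mul_le_mul hwh hth hh.le pw
  obtain ⟨L, hL⟩ : ∃ L, (Cp + Cm) * Q * Km Y * ε ^ (-Y) = L := ⟨_, rfl⟩
  obtain ⟨B, hB⟩ : ∃ B, |b| / ε + 19 * L = B := ⟨_, rfl⟩
  have eL : L = c1 * y := by rw [← hL, hc1, hy]
  have pB : 0 ≤ B := by rw [← hB, eL]; positivity
  have hBle : h * B ≤ c2 * w := by
    have : |b| / ε ≤ |b| * y := by
      rw [div_eq_mul_one_div]; gcongr
    rw [← hB, eL, ← hc2, ← hw]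
    calc h * (|b| / ε + 19 * (c1 * y)) ≤ h * (|b| * y + 19 * (c1 * y)) := by gcongr
      _ = _ := by ring
  have phB : 0 ≤ h * B := by positivity
  have hsε : (s : ℝ) / ε ^ 2 = σ ^ 2 * t := by rw [hsv, ← ht]; ring
  have hBs : h * B + s / ε ^ 2 ≤ (c2 + σ ^ 2) * t := by
    rw [hsε]
    have : c2 * w ≤ c2 * t := mul_le_mul_of_nonneg_left (by linarith) pc2
    linarith
  -- smooth part
  have a1 := smooth_total hk hY1 hY2 hCp hCm hq hqm hQ hε hε1 hh.le hμ hG hL hB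
  rw [hK0] at a1
  have a1' : K0 * (h * B * (h * B + s / ε ^ 2)) ≤ K0 * (c2 * (c2 + σ ^ 2)) * (w * t) := by
    calc _ ≤ K0 * (c2 * w * ((c2 + σ ^ 2) * t)) := by gcongr
      _ = _ := by ring
  -- q correction
  have a2 := q_fs hk hY2 hCp hCm hq hqm hQ hε ig pg hg
  have a2' := q_ac hCp hCm hε ig pg hg
  rw [hz] at eg
  -- gaussian
  have a3 := gauss_fs (k := k) (m := m) hs0 hε hh hsv hhε
  have a4 := gauss_prob (m := m) hs0 hε hsv
  rw [hD1, hE, ht] at a3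
  rw [hD2, ht] at a4
  rw [ht] at hm
  -- rough part
  obtain ⟨Mt, hMt⟩ : ∃ Mt, (∫ v : ℝ, (1 + v ^ 2) ^ 2 * ‖G₁ v‖) * (h * B) ^ 2
      + (gaussianReal 0 s).real {y | ε / 8 ≤ |y|} = Mt := ⟨_, rfl⟩
  have hMle : Mt ≤ cM * (w * t) := by
    rw [← hMt, hK1, ← hcM]
    have e1 : (h * B) ^ 2 ≤ c2 ^ 2 * (w * t) := by
      calc _ ≤ (c2 * w) ^ 2 := by gcongr
        _ = c2 ^ 2 * (w * w) := by ring
        _ ≤ _ := by gcongr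
    have e2 : D2 * t ^ m ≤ D2 * (w * t) := by gcongr; linarith
    have e3 : K1 * (h * B) ^ 2 ≤ K1 * (c2 ^ 2 * (w * t)) := by gcongr
    linarith
  have a5 := rough_total (f := fun x => f0 k ε x - fs k ε x) (A := E) hY1 hY2 hCp hCm hq hqm hQ hε
    hε1 hh.le hμ hG₁ hG₂
    ((measurable_f0 k ε).sub (continuous_fs k ε).measurable)
    (fun x => by linarith [fs_le_f0 (k := k) hε x])
    (fun x => by rw [← hE]; linarith [fs_nonneg (k := k) hε x, f0_le (k := k) hε x])
    (fun x hx => fr_supp hε hx) hL hB hMt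
  rw [hK2, hy, hc3, eL] at a5
  have pMt : 0 ≤ Mt := by
    rw [← hMt, hK1]; have := measureReal_nonneg (μ := gaussianReal 0 s) (s := {y | ε / 8 ≤ |y|})
    positivity
  have a5' : E * (Mt + 2 * (h * (256 * (c1 * y))) ^ 2)
        + h * (E * (256 * (c1 * y) + 256 * (c3 * y)) * Mt
            + E * ∫ x, |q x - 1| * ac Y Cp Cm ε x)
        + h * (2 * E * y * (K2 * (h * B + s / ε ^ 2)))
      ≤ ((cM + 2 * (256 * c1) ^ 2) + (256 * c1 + 256 * c3) * cM + 2 * K2 * (c2 + σ ^ 2)) * (E * (w * t))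
        + 256 * C * (E * (h * z)) := by
    have r1 : 2 * (h * (256 * (c1 * y))) ^ 2 ≤ 2 * (256 * c1) ^ 2 * (w * t) := by
      calc _ = 2 * (256 * c1) ^ 2 * (w * w) := by rw [← hw]; ring
        _ ≤ _ := by gcongr
    have r2 : h * (E * (256 * (c1 * y) + 256 * (c3 * y)) * Mt)
        ≤ E * ((256 * c1 + 256 * c3) * cM * (w * t)) := by
      calc _ = E * ((256 * c1 + 256 * c3) * (w * Mt)) := by rw [← hw]; ring
        _ ≤ E * ((256 * c1 + 256 * c3) * (1 * (cM * (w * t)))) := by gcongr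
        _ = _ := by ring
    have r3 : h * (E * ∫ x, |q x - 1| * ac Y Cp Cm ε x) ≤ 256 * C * (E * (h * z)) := by
      calc _ ≤ h * (E * (256 * (C * z))) := by gcongr; linarith
        _ = _ := by ring
    have r4 : h * (2 * E * y * (K2 * (h * B + s / ε ^ 2)))
        ≤ E * (2 * K2 * (c2 + σ ^ 2) * (w * t)) := by
      calc _ = 2 * E * w * (K2 * (h * B + s / ε ^ 2)) := by rw [← hw]; ring
        _ ≤ 2 * E * w * (K2 * ((c2 + σ ^ 2) * t)) := by gcongr
        _ = _ := by ring
    have r5 := mul_le_mul_of_nonneg_left (add_le_add hMle r1) pE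
    calc _ = E * (Mt + 2 * (h * (256 * (c1 * y))) ^ 2)
        + h * (E * (256 * (c1 * y) + 256 * (c3 * y)) * Mt)
            + h * (E * ∫ x, |q x - 1| * ac Y Cp Cm ε x)
        + h * (2 * E * y * (K2 * (h * B + s / ε ^ 2))) := by ring
      _ ≤ E * (cM * (w * t) + 2 * (256 * c1) ^ 2 * (w * t)) + E * ((256 * c1 + 256 * c3) * cM * (w * t))
          + 256 * C * (E * (h * z)) + E * (2 * K2 * (c2 + σ ^ 2) * (w * t)) :=
        add_le_add (add_le_add (add_le_add r5 r2) r3) r4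
      _ = _ := by ring
  -- decomposition
  obtain ⟨is0, es0⟩ := stable_f0 (Y := Y) (Cp := Cp) (Cm := Cm) hk hY2 hε
  have isfs : Integrable (fun x => sd Y Cp Cm x * fs k ε x) := by
    refine is0.mono'
      (measurable_sd.mul (continuous_fs k ε).measurable).aestronglyMeasurable
      (Eventually.of_forall fun x => ?_)
    rw [Real.norm_of_nonneg (mul_nonneg (sd_nonneg hCp hCm x) (fs_nonneg hε x))]
    exact mul_le_mul_of_nonneg_left (fs_le_f0 hε x) (sd_nonneg hCp hCm x)
  have d1 : ∫ x, sd Y Cp Cm x * (f0 k ε x - fs k ε x)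
      = (Cp + Cm) / (2 * k - Y) * ε ^ (2 * (k : ℝ) - Y) - E * ∫ x, sd Y Cp Cm x * Fs k (ε⁻¹ * x) := by
    simp_rw [mul_sub]
    rw [integral_sub is0 isfs, es0, ← integral_const_mul, ← hE]
    congr 2; ext x; simp only [fs]; ring
  have if0 : Integrable (f0 k ε) μ := bdd_integrable (measurable_f0 k ε) (f0_nonneg k ε) (f0_le hε)
  have ifs : Integrable (fs k ε) μ := bdd_integrable (continuous_fs k ε).measurable (fs_nonneg hε)
    (fun x => (fs_le_f0 hε x).trans (f0_le hε x))
  have d2 : ∫ x, (f0 k ε x - fs k ε x) ∂μ = (∫ x, f0 k ε x ∂μ) - E * ∫ x, Fs k (ε⁻¹ * x) ∂μ := by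
    rw [integral_sub if0 ifs, ← integral_const_mul, ← hE]
    rfl
  have d3 : ∫ x, fs k ε x ∂(gaussianReal 0 s) = E * ∫ x, Fs k (ε⁻¹ * x) ∂(gaussianReal 0 s) := by
    rw [← integral_const_mul, ← hE]; rfl
  rw [d1, d2] at a5
  rw [d3] at a3
  rw [hE, hy, hz, ht, hw]
  have b1 := mul_le_mul_of_nonneg_left (a1.trans a1') pE
  have b2 := mul_le_mul_of_nonneg_left (a2.trans eg) (mul_nonneg hh.le pE)
  have b3 : D1 * (E * t ^ m) ≤ D1 * (E * (w * t)) := by gcongr; linarith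
  have b4 := a3.trans b3
  have b5 := a5.trans a5'
  rw [← abs_of_nonneg pE, ← abs_mul, abs_of_nonneg pE] at b1
  rw [← abs_of_nonneg (mul_nonneg hh.le pE), ← abs_mul, abs_of_nonneg (mul_nonneg hh.le pE)] at b2
  have pTE : 0 ≤ E * (w * t) := by positivity
  have pSE : 0 ≤ E * (h * z) := by positivity
  rw [abs_le] at b1 b2 b4 b5 ⊢
  have p1 : 0 ≤ K0 * (c2 * (c2 + σ ^ 2)) + D1 + (cM + 2 * (256 * c1) ^ 2) + (256 * c1 + 256 * c3) * cM
    + 2 * K2 * (c2 + σ ^ 2) := by positivity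
  have q1 := mul_nonneg p1 pSE
  have q2 := mul_nonneg (mul_nonneg (by norm_num : (0:ℝ) ≤ 257) hC0) pTE
  constructor
  · linarith [b1.1, b2.1, b4.1, b5.1]
  · linarith [b1.2, b2.2, b4.2, b5.2]

theorem charFun_law {Ω : Type*} [MeasurableSpace Ω] {P : Measure Ω} [IsProbabilityMeasure P]
    {Y Cp Cm σ b h : ℝ} {q : ℝ → ℝ} {J W : Ω → ℝ}
    (hWmeas : Measurable W) (hW : P.map W = gaussianReal 0 1) (hJmeas : Measurable J)
    (hh : 0 < h)
    (hJcf : ∀ u : ℝ,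
      ∫ ω, Complex.exp (Complex.I * u * J ω) ∂P = Complex.exp (h * psiJ b Y Cp Cm q u))
    (hindep : IndepFun W J P) {s : ℝ≥0} (hs : (s : ℝ) = σ ^ 2 * h) (u : ℝ) :
    charFun (P.map (fun ω => σ * Real.sqrt h * W ω + J ω)) u
      = Complex.exp (-(s * u ^ 2 / 2 : ℝ) + h * Psi b (levyMeasure Y Cp Cm q) u) := by
  have hi : IndepFun (fun ω => σ * Real.sqrt h * W ω) J P :=
    hindep.comp (φ := fun x => σ * Real.sqrt h * x) (ψ := id) (by fun_prop) measurable_id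
  rw [hi.charFun_map_fun_add_eq_mul (by fun_prop) (by fun_prop), Pi.mul_apply, charFun_map_mul_comp (by fun_prop), hW,
    charFun_gaussianReal, charFun_eq_integral_I, integral_map (by fun_prop) (by fun_prop), hJcf,
    psiJ_eq, Complex.exp_add]
  congr 2
  rw [hs]
  have : ((Real.sqrt h : ℝ) : ℂ) ^ 2 = h := by
    rw [← Complex.ofReal_pow, Real.sq_sqrt hh.le]
  push_cast
  rw [mul_pow, mul_pow, this]
  ring

theorem eps_facts {δ : ℝ} (hδ1 : 0 < δ) {m : ℕ} (hm : 1 ≤ δ * m) {h ε : ℝ} (hh : 0 < h)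
    (hh1 : h ≤ 1) (hlow : h ^ (1 / 2 - δ) ≤ ε) :
    h ≤ ε ^ 2 ∧ (h / ε ^ 2) ^ m ≤ h ^ 2 := by
  have hp : 0 < h ^ (1 / 2 - δ) := by positivity
  have hε : 0 < ε := hp.trans_le hlow
  have h1 : h ^ (1 - 2 * δ) ≤ ε ^ 2 := by
    calc _ = (h ^ (1 / 2 - δ)) ^ 2 := by
          rw [← Real.rpow_natCast, ← Real.rpow_mul hh.le]; congr 1; push_cast; ring
      _ ≤ _ := by gcongr
  have h2 : h / ε ^ 2 ≤ h ^ (2 * δ) := by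
    rw [div_le_iff₀ (by positivity)]
    calc h = h ^ (2 * δ) * h ^ (1 - 2 * δ) := by
          rw [← Real.rpow_add hh]; simp
      _ ≤ _ := by gcongr
  constructor
  · refine le_trans ?_ h1
    calc h = h ^ (1 : ℝ) := by simp
      _ ≤ _ := Real.rpow_le_rpow_of_exponent_ge hh hh1 (by linarith)
  · calc _ ≤ (h ^ (2 * δ)) ^ m := by gcongr
      _ = h ^ (2 * δ * m) := by rw [← Real.rpow_natCast, ← Real.rpow_mul hh.le]
      _ ≤ h ^ (2 : ℝ) := Real.rpow_le_rpow_of_exponent_ge hh hh1 (by linarith)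
      _ = h ^ 2 := by norm_num

theorem split_bound {r A B K : ℝ} (hA : 0 < A) (hB : 0 < B) (h : |r| ≤ K * (A + B)) :
    ‖r * A / (A + B)‖ ≤ K * ‖A‖ ∧ ‖r * B / (A + B)‖ ≤ K * ‖B‖ := by
  have hAB : 0 < A + B := by positivity
  constructor
  · rw [Real.norm_eq_abs, abs_div, abs_mul, abs_of_pos hAB, Real.norm_eq_abs, abs_of_pos hA,
      div_le_iff₀ hAB]
    nlinarith
  · rw [Real.norm_eq_abs, abs_div, abs_mul, abs_of_pos hAB, Real.norm_eq_abs, abs_of_pos hB,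
      div_le_iff₀ hAB]
    nlinarith

/-- Lemma B.3: expansion of the truncated even moments of `X_h`:
`E(X_h^{2k} 1_{|X_h|≤ε}) = (2k−1)!! σ^{2k} h^k + ((C₊+C₋)/(2k−Y)) h ε^{2k−Y} + remainders`. -/
theorem truncated_even_moments
    {Ω : Type*} [MeasurableSpace Ω] (P : Measure Ω) [IsProbabilityMeasure P]
    (Y Cp Cm σ b : ℝ) (q : ℝ → ℝ)
    (hY1 : 1 < Y) (hY2 : Y < 2)
    (hCp : 0 < Cp) (hCm : 0 < Cm) (hσ : 0 < σ)
    (hq_meas : Measurable q) (hq_nonneg : ∀ x, 0 ≤ q x)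
    (hq_bdd : ∃ M : ℝ, ∀ x, q x ≤ M)
    (hq_lim : Tendsto q (𝓝[≠] (0 : ℝ)) (𝓝 1))
    (hq_taylor : ∃ αp αm : ℝ, αp ≠ 0 ∧ αm ≠ 0 ∧
      IntegrableOn (fun x => |q x - 1 - αp * x| * x ^ (-Y - 1)) (Set.Ioc (0 : ℝ) 1) ∧
      IntegrableOn (fun x => |q x - 1 - αm * x| * |x| ^ (-Y - 1)) (Set.Ico (-1 : ℝ) 0))
    (hq_log : ∃ K M : ℝ, ∀ x : ℝ, M ≤ |x| → |Real.log (q x)| ≤ K * |x|)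
    (hq_inf : ∀ ε : ℝ, 0 < ε → ∃ c : ℝ, 0 < c ∧ ∀ x : ℝ, x ≠ 0 → |x| < ε → c ≤ q x)
    (hq_sq : IntegrableOn (fun x => q x ^ 2 * |x| ^ (-1 - Y)) {x : ℝ | 1 < |x|})
    -- the jump part `J` and the Brownian part `W`
    (J : ℝ → Ω → ℝ) (W : Ω → ℝ)
    (hWmeas : Measurable W) (hW : P.map W = gaussianReal 0 1)
    (hJmeas : ∀ h : ℝ, Measurable (J h))
    (hJcf : ∀ h : ℝ, 0 < h → ∀ u : ℝ,
      ∫ ω, Complex.exp (Complex.I * u * J h ω) ∂P = Complex.exp (h * psiJ b Y Cp Cm q u))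
    (hindep : ∀ h : ℝ, 0 < h → IndepFun W (J h) P)
    (k : ℕ) (hk : 1 ≤ k)
    -- the threshold `ε = ε(h)`
    (ε : ℝ → ℝ) (hεpos : ∀ h : ℝ, 0 < h → 0 < ε h)
    (hε0 : Tendsto ε (𝓝[>] (0 : ℝ)) (𝓝 0))
    (δbar : ℝ) (hδ1 : 0 < δbar) (hδ2 : δbar < 1 / 2)
    (hεlow : ∀ᶠ h in 𝓝[>] (0 : ℝ), h ^ (1 / 2 - δbar) ≤ ε h) :
    ∃ R₁ R₂ R₃ : ℝ → ℝ,
      (∀ h : ℝ, 0 < h →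
        (∫ ω, Set.indicator {x : ℝ | |x| ≤ ε h} (fun x => x ^ (2 * k))
            (σ * Real.sqrt h * W ω + J h ω) ∂P)
          = (Nat.doubleFactorial (2 * k - 1) : ℝ) * σ ^ (2 * k) * h ^ k
            + (Cp + Cm) / (2 * k - Y) * h * ε h ^ (2 * (k : ℝ) - Y)
            + R₁ h + R₂ h + R₃ h) ∧
      R₁ =O[𝓝[>] (0 : ℝ)] (fun h => h ^ 2 * ε h ^ (2 * (k : ℝ) - Y - 2)) ∧
      R₂ =O[𝓝[>] (0 : ℝ)] (fun h => h * ε h ^ (2 * (k : ℝ) - Y / 2)) ∧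
      R₃ =O[𝓝[>] (0 : ℝ)]
        (fun h => Real.sqrt h * ε h ^ (2 * k - 1) * Real.exp (-(ε h ^ 2) / (2 * σ ^ 2 * h))) := by
  obtain ⟨Q, hQ⟩ := hq_bdd
  obtain ⟨m, hm⟩ := exists_nat_ge (1 / δbar)
  have hm' : 1 ≤ δbar * m := by rw [div_le_iff₀ hδ1] at hm; linarith
  obtain ⟨K, hK0, hK⟩ := main_bound (b := b) hY1 hY2 hCp hCm hσ hq_nonneg hq_meas hQ hq_taylor hk m
  obtain ⟨E, hE⟩ : ∃ E : ℝ → ℝ, E = fun h => ∫ ω, Set.indicator {x : ℝ | |x| ≤ ε h}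
      (fun x => x ^ (2 * k)) (σ * Real.sqrt h * W ω + J h ω) ∂P := ⟨_, rfl⟩
  obtain ⟨r, hr⟩ : ∃ r : ℝ → ℝ, r = fun h =>
      E h - (Nat.doubleFactorial (2 * k - 1) : ℝ) * σ ^ (2 * k) * h ^ k
        - (Cp + Cm) / (2 * k - Y) * h * ε h ^ (2 * (k : ℝ) - Y) := ⟨_, rfl⟩
  set A : ℝ → ℝ := fun h => h ^ 2 * ε h ^ (2 * (k : ℝ) - Y - 2) with hA
  set B : ℝ → ℝ := fun h => h * ε h ^ (2 * (k : ℝ) - Y / 2) with hB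
  have pA : ∀ h, 0 < h → 0 < A h := fun h hh => by
    have := hεpos h hh
    simp only [hA]; positivity
  have pB : ∀ h, 0 < h → 0 < B h := fun h hh => by
    have := hεpos h hh
    simp only [hB]; positivity
  have hpos : ∀ᶠ h in 𝓝[>] (0 : ℝ), 0 < h := eventually_mem_nhdsWithin
  have hbound : ∀ᶠ h in 𝓝[>] (0 : ℝ), |r h| ≤ K * (A h + B h) := by
    have hle1 : ∀ᶠ h in 𝓝[>] (0 : ℝ), h ≤ 1 :=
      (eventually_le_nhds (by norm_num : (0 : ℝ) < 1)).filter_mono nhdsWithin_le_nhds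
    have hε3 : ∀ᶠ h in 𝓝[>] (0 : ℝ), ε h ≤ 1 / 3 :=
      hε0.eventually (eventually_le_nhds (by norm_num : (0 : ℝ) < 1 / 3))
    filter_upwards [hpos, hle1, hε3, hεlow] with h hh hh1 hh3 hlow
    have he := hεpos h hh
    obtain ⟨f1, f2⟩ := eps_facts hδ1 hm' hh hh1 hlow
    have hmX : Measurable (fun ω => σ * Real.sqrt h * W ω + J h ω) := by
      have := hJmeas h
      fun_prop
    have hprob : IsProbabilityMeasure (P.map (fun ω => σ * Real.sqrt h * W ω + J h ω)) :=
      Measure.isProbabilityMeasure_map hmX.aemeasurable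
    obtain ⟨s, hs⟩ : ∃ s : ℝ≥0, (s : ℝ) = σ ^ 2 * h := ⟨⟨σ ^ 2 * h, by positivity⟩, rfl⟩
    have hmain := hK h (ε h) s
      (P.map (fun ω => σ * Real.sqrt h * W ω + J h ω)) hh he (by linarith) f1 f2 hs
      (charFun_law hWmeas hW (hJmeas h) hh (hJcf h hh) (hindep h hh) hs)
    rw [integral_map hmX.aemeasurable (measurable_f0 k (ε h)).aestronglyMeasurable] at hmain
    have e1 : ε h ^ (2 * k) * (h * ε h ^ (-Y) * (h / ε h ^ 2)) = A h := by
      simp only [hA]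
      rw [show 2 * (k : ℝ) - Y - 2 = ((2 * k : ℕ) : ℝ) + (-Y) - ((2 : ℕ) : ℝ) by push_cast; ring,
        Real.rpow_sub he, Real.rpow_add he, Real.rpow_natCast, Real.rpow_natCast]
      field_simp
    have e2 : ε h ^ (2 * k) * (h * ε h ^ (-(Y / 2))) = B h := by
      simp only [hB]
      rw [show 2 * (k : ℝ) - Y / 2 = ((2 * k : ℕ) : ℝ) + (-(Y / 2)) by push_cast; ring,
        Real.rpow_add he, Real.rpow_natCast]
      ring
    rw [e1, e2] at hmain
    refine le_trans (le_of_eq ?_) hmain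
    rw [hr, hE]
    simp only [f0]
    congr 1
    have hcast : σ ^ (2 * k) * h ^ k = (σ ^ 2 * h) ^ k := by rw [mul_pow, ← pow_mul]
    rw [mul_assoc _ (σ ^ (2 * k)), hcast, hs]
    ring
  refine ⟨fun h => r h * A h / (A h + B h), fun h => r h * B h / (A h + B h), fun _ => 0, ?_, ?_, ?_, ?_⟩
  · intro h hh
    have h1 := pA h hh
    have h2 := pB h hh
    have h3 : r h * A h / (A h + B h) + r h * B h / (A h + B h) = r h := by
      have : A h + B h ≠ 0 := by positivity
      field_simp
    have h4 : E h = ∫ ω, Set.indicator {x : ℝ | |x| ≤ ε h}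
      (fun x => x ^ (2 * k)) (σ * Real.sqrt h * W ω + J h ω) ∂P := by rw [hE]
    have h5 : r h = E h - (Nat.doubleFactorial (2 * k - 1) : ℝ) * σ ^ (2 * k) * h ^ k
        - (Cp + Cm) / (2 * k - Y) * h * ε h ^ (2 * (k : ℝ) - Y) := by rw [hr]
    rw [← h4]
    linarith
  · refine IsBigO.of_bound K ?_
    filter_upwards [hpos, hbound] with h hh hb
    exact (split_bound (pA h hh) (pB h hh) hb).1
  · refine IsBigO.of_bound K ?_
    filter_upwards [hpos, hbound] with h hh hb
    exact (split_bound (pA h hh) (pB h hh) hb).2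
  · exact isBigO_zero _ _

end
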